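/- Assume Φ̂_{,1}(1,…,1) = 0. Let r_c ∈ C²((0,1]) ∩ C([0,1]) with r_c' > 0 solve the modified equilibrium equation on (0,1) with r_c(0) > 0 and lim_{R→0⁺} T̂(r_c(R)) = 0. Then r_c extends to a solution of the modified equilibrium equation on (0,∞) satisfying r_c'(R) < r_c(R)/R for all R ∈ (0,∞); this extended solution is unique up to the scaling below (it does not depend on the value r_c(1)); there exists λ_c > 1 with lim_{R→∞} r_c'(R) = lim_{R→∞} r_c(R)/R = λ_c; and if r_λ is any solution of the modified equilibrium equation on (0,1] with lim_{R→0⁺} T̂(r_λ(R)) = 0 and r_λ(1) = λ for some λ > λ_c, then r_λ(R) = r_c(αR)/α for all R ∈ (0,1], where α is the unique solution of r_c(α)/α = λ. -/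

import Mathlib

open Real MeasureTheory Filter Set
open scoped ENNReal NNReal

noncomputable section

/-- Radial stored energy `Φ(q, v, …, v) = (κ/n)(qⁿ + (n−1)vⁿ) + h(q v^{n−1})`,
the restriction of `Φ(v₁,…,vₙ) = (κ/n)(v₁ⁿ+⋯+vₙⁿ) + h(v₁⋯vₙ)` to points
`(q, v, …, v)`. -/
def Phi (n : ℕ) (κ : ℝ) (h : ℝ → ℝ) (q v : ℝ) : ℝ :=
  (κ / n) * (q ^ n + ((n : ℝ) - 1) * v ^ n) + h (q * v ^ (n - 1))

/-- `Φ_{,1}(q, v, …, v) = κ q^{n−1} + v^{n−1} h'(q v^{n−1})`. -/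
def Phi1 (n : ℕ) (κ : ℝ) (h' : ℝ → ℝ) (q v : ℝ) : ℝ :=
  κ * q ^ (n - 1) + v ^ (n - 1) * h' (q * v ^ (n - 1))

/-- `Φ_{,2}(q, v, …, v) = κ v^{n−1} + q v^{n−2} h'(q v^{n−1})`. -/
def Phi2 (n : ℕ) (κ : ℝ) (h' : ℝ → ℝ) (q v : ℝ) : ℝ :=
  κ * v ^ (n - 1) + q * v ^ (n - 2) * h' (q * v ^ (n - 1))

/-- Radial Cauchy stress `T(q,v) = v^{1−n} Φ_{,1}(q,v,…,v) = κ(q/v)^{n−1} + h'(q v^{n−1})`. -/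
def Tstress (n : ℕ) (κ : ℝ) (h' : ℝ → ℝ) (q v : ℝ) : ℝ :=
  κ * (q / v) ^ (n - 1) + h' (q * v ^ (n - 1))

/-- The determinant function `δ(R) = r'(R) (r(R)/R)^{n−1}`. -/
def del (n : ℕ) (r r' : ℝ → ℝ) (R : ℝ) : ℝ :=
  r' R * (r R / R) ^ (n - 1)

/-- Hypotheses on `h : (0,∞) → [0,∞)`: it is `C²` with derivative `h'` and second
derivative `h''`, `h'' > 0`, `h(d) → ∞` as `d → 0⁺`, `h(d)/d → ∞` as `d → ∞`,
`h'(d) → −∞` as `d → 0⁺` and `h'(d) → ∞` as `d → ∞`. -/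
structure GoodH (h h' h'' : ℝ → ℝ) : Prop where
  nonneg : ∀ d : ℝ, 0 < d → 0 ≤ h d
  deriv1 : ∀ d : ℝ, 0 < d → HasDerivAt h (h' d) d
  deriv2 : ∀ d : ℝ, 0 < d → HasDerivAt h' (h'' d) d
  cont2 : ContinuousOn h'' (Set.Ioi 0)
  hpp_pos : ∀ d : ℝ, 0 < d → 0 < h'' d
  lim_zero : Tendsto h (nhdsWithin 0 (Set.Ioi 0)) atTop
  lim_growth : Tendsto (fun d => h d / d) atTop atTop
  dlim_zero : Tendsto h' (nhdsWithin 0 (Set.Ioi 0)) atBot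
  dlim_top : Tendsto h' atTop atTop

/-- `r ∈ C²((0,1])`, with `r, r' > 0` on `(0,1]`, solving the radial equilibrium
equation `(d/dR)[R^{n−1} Φ_{,1}(r(R))] = (n−1) R^{n−2} Φ_{,2}(r(R))`. -/
structure RadialSol (n : ℕ) (κ : ℝ) (h' : ℝ → ℝ) (r r' r'' : ℝ → ℝ) : Prop where
  pos : ∀ R ∈ Set.Ioc (0:ℝ) 1, 0 < r R
  derivPos : ∀ R ∈ Set.Ioc (0:ℝ) 1, 0 < r' R
  hasDeriv : ∀ R ∈ Set.Ioc (0:ℝ) 1, HasDerivWithinAt r (r' R) (Set.Ioc 0 1) R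
  hasDeriv2 : ∀ R ∈ Set.Ioc (0:ℝ) 1, HasDerivWithinAt r' (r'' R) (Set.Ioc 0 1) R
  cont2 : ContinuousOn r'' (Set.Ioc 0 1)
  equil : ∀ R ∈ Set.Ioc (0:ℝ) 1,
    HasDerivWithinAt (fun s => s ^ (n - 1) * Phi1 n κ h' (r' s) (r s / s))
      (((n : ℝ) - 1) * R ^ (n - 2) * Phi2 n κ h' (r' R) (r R / R)) (Set.Ioc 0 1) R


/-- Modified radial stored energy
`Φ̂(q,v,…,v) = (κ/n)qⁿ + h(q v^{n−1}) + κ q v^{n−1}((n−1)/n + ln(v^{n−1}))`. -/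
def PhiHat (n : ℕ) (κ : ℝ) (h : ℝ → ℝ) (q v : ℝ) : ℝ :=
  (κ / n) * q ^ n + h (q * v ^ (n - 1)) +
    κ * (q * v ^ (n - 1)) * (((n : ℝ) - 1) / n + ((n : ℝ) - 1) * Real.log v)

/-- `Φ̂_{,1}(q,v,…,v) = κ q^{n−1} + v^{n−1} h'(q v^{n−1}) + κ v^{n−1}((n−1)/n + (n−1) ln v)`. -/
def PhiHat1 (n : ℕ) (κ : ℝ) (h' : ℝ → ℝ) (q v : ℝ) : ℝ :=
  κ * q ^ (n - 1) + v ^ (n - 1) * h' (q * v ^ (n - 1)) +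
    κ * v ^ (n - 1) * (((n : ℝ) - 1) / n + ((n : ℝ) - 1) * Real.log v)

/-- `Φ̂_{,2}(q,v,…,v) = q v^{n−2}(h'(q v^{n−1}) + κ + κ(n−1)(1/n + ln v))`. -/
def PhiHat2 (n : ℕ) (κ : ℝ) (h' : ℝ → ℝ) (q v : ℝ) : ℝ :=
  q * v ^ (n - 2) *
    (h' (q * v ^ (n - 1)) + κ + κ * (((n : ℝ) - 1) * (1 / n + Real.log v)))

/-- Modified radial Cauchy stress
`T̂(q,v) = κ(q/v)^{n−1} + h'(q v^{n−1}) + (n−1)κ(1/n + ln v)`. -/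
def THat (n : ℕ) (κ : ℝ) (h' : ℝ → ℝ) (q v : ℝ) : ℝ :=
  κ * (q / v) ^ (n - 1) + h' (q * v ^ (n - 1)) +
    ((n : ℝ) - 1) * κ * (1 / n + Real.log v)

/-- `r ∈ C²((0,1])`, with `r, r' > 0` on `(0,1]`, solving the modified radial
equilibrium equation `(d/dR)[R^{n−1} Φ̂_{,1}(r(R))] = (n−1) R^{n−2} Φ̂_{,2}(r(R))`. -/
structure ModRadialSol (n : ℕ) (κ : ℝ) (h' : ℝ → ℝ) (r r' r'' : ℝ → ℝ) : Prop where
  pos : ∀ R ∈ Set.Ioc (0:ℝ) 1, 0 < r R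
  derivPos : ∀ R ∈ Set.Ioc (0:ℝ) 1, 0 < r' R
  hasDeriv : ∀ R ∈ Set.Ioc (0:ℝ) 1, HasDerivWithinAt r (r' R) (Set.Ioc 0 1) R
  hasDeriv2 : ∀ R ∈ Set.Ioc (0:ℝ) 1, HasDerivWithinAt r' (r'' R) (Set.Ioc 0 1) R
  cont2 : ContinuousOn r'' (Set.Ioc 0 1)
  equil : ∀ R ∈ Set.Ioc (0:ℝ) 1,
    HasDerivWithinAt (fun s => s ^ (n - 1) * PhiHat1 n κ h' (r' s) (r s / s))
      (((n : ℝ) - 1) * R ^ (n - 2) * PhiHat2 n κ h' (r' R) (r R / R)) (Set.Ioc 0 1) R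


/-!
In the variables `s = ln R`, `x = ln (r / R)` and `w = R r' / r` the modified equilibrium equation
is autonomous: `x' = w - 1` and `P' = (n - 1) κ (1 - wⁿ)`, where the reduced stress `P` is strictly
increasing in `w` at fixed `x`. On a compact range of `w` the map `(P, x) ↦ w` is Lipschitz, so a
path is determined by its position at one time, and the constant paths `w = 1` confine every other
path to `w < 1` or `w > 1`. Paths in `w < 1` extend to all `s`, and rescaling `r` translates a path
in `s`.

Along a path with `w < 1` the stress `T̂` increases from its value `0` at the cavity; hence `x`
decreases to a limit `xc` with `T̂ > 0` at `w = 1`, `x = xc`, while `w` increases from `0` to `1`,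
and `λ_c = e^xc`. Two such paths have, after a translation, the same `w` at some time, and it
remains to see that they then have the same `x`. The equation is singular at the cavity, where `x`
blows up, but with `X = (n - 1) κ x` and `ζ = w + ⋯ + w^(n-1)` the Legendre transform `Y = T̂ + ζ X`
satisfies `dY/dζ = X`. The difference `D` of the two transforms, as functions of `ζ`, tends to `0`
as `ζ → 0`, and monotonicity of `h'` gives `|D'| ≤ |D|`, so `D = 0` by Grönwall's inequality.
-/

section ODE

variable {E : Type*} [NormedAddCommGroup E] [NormedSpace ℝ E] {F : E → E} {K L : ℝ≥0}

theorem exists_hasDerivAt_Ioo_of_bounded_lipschitz [CompleteSpace E] (hb : ∀ y, ‖F y‖ ≤ L)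
    (hF : LipschitzWith K F) (y₀ : E) (r : ℝ≥0) :
    ∃ y : ℝ → E, y 0 = y₀ ∧ ∀ t ∈ Ioo (-r : ℝ) r, HasDerivAt y (F (y t)) t := by
  have h0 : (0 : ℝ) ∈ Icc (-r : ℝ) r := by simp
  have hpl : IsPicardLindelof (fun _ ↦ F) (⟨0, h0⟩ : Icc (-r : ℝ) r) y₀ (L * r) 0 L K :=
    IsPicardLindelof.of_time_independent (fun y _ ↦ hb y) hF.lipschitzOnWith (by simp)
  obtain ⟨y, hy0, hy⟩ := hpl.exists_eq_forall_mem_Icc_hasDerivWithinAt₀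
  exact ⟨y, hy0, fun t ht ↦
    (hy t (Ioo_subset_Icc_self ht)).hasDerivAt (Icc_mem_nhds ht.1 ht.2)⟩

theorem exists_forall_hasDerivAt_of_bounded_lipschitz [CompleteSpace E] (hb : ∀ y, ‖F y‖ ≤ L)
    (hF : LipschitzWith K F) (y₀ : E) :
    ∃ y : ℝ → E, y 0 = y₀ ∧ ∀ t, HasDerivAt y (F (y t)) t := by
  choose y hy0 hy using fun N : ℕ ↦
    exists_hasDerivAt_Ioo_of_bounded_lipschitz hb hF y₀ (N + 1)
  push_cast at hy
  have hcompat : ∀ M N : ℕ, M ≤ N → EqOn (y M) (y N) (Ioo (-(M + 1)) (M + 1)) := by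
    intro M N hMN
    have hsub : Ioo (-(M + 1) : ℝ) (M + 1) ⊆ Ioo (-(N + 1)) (N + 1) := by gcongr
    exact ODE_solution_unique_of_mem_Ioo (v := fun _ ↦ F) (s := fun _ ↦ univ) (K := K) (t₀ := 0)
      (fun _ _ ↦ hF.lipschitzOnWith) ⟨by linarith [M.cast_nonneg (α := ℝ)], by positivity⟩
      (fun t ht ↦ ⟨hy M t ht, trivial⟩) (fun t ht ↦ ⟨hy N t (hsub ht), trivial⟩)
      ((hy0 M).trans (hy0 N).symm)
  have hglue : ∀ N : ℕ, ∀ t : ℝ, |t| < N → y ⌈|t|⌉₊ t = y N t := fun N t ht ↦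
    hcompat _ _ (Nat.ceil_le.2 ht.le) (abs_lt.1 ((Nat.le_ceil |t|).trans_lt (lt_add_one _)))
  refine ⟨fun t ↦ y ⌈|t|⌉₊ t, by simpa using hy0 0, fun t ↦ ?_⟩
  obtain ⟨N, hN⟩ := exists_nat_gt |t|
  have hev : (fun s ↦ y ⌈|s|⌉₊ s) =ᶠ[nhds t] y N :=
    (continuous_abs.tendsto t).eventually_lt_const hN |>.mono fun s hs ↦ hglue N s hs
  exact ((hy N t (abs_lt.1 (hN.trans (lt_add_one _)))).congr_of_eventuallyEq hev).congr_deriv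
    (congrArg F (hglue N t hN).symm)

theorem eqOn_of_hasDerivWithinAt_of_lipschitz (hF : LipschitzWith K F) {S : Set ℝ}
    (hS : S.OrdConnected) {f g : ℝ → E} (hf : ∀ t ∈ S, HasDerivWithinAt f (F (f t)) S t)
    (hg : ∀ t ∈ S, HasDerivWithinAt g (F (g t)) S t) {t₀ : ℝ} (ht₀ : t₀ ∈ S)
    (h₀ : f t₀ = g t₀) : EqOn f g S := by
  have hcont {y : ℝ → E} (hy : ∀ t ∈ S, HasDerivWithinAt y (F (y t)) S t) {a b : ℝ} (ha : a ∈ S)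
      (hb : b ∈ S) : ContinuousOn y (Icc a b) := fun t ht ↦
    (hy t (hS.out ha hb ht)).continuousWithinAt.mono (hS.out ha hb)
  intro t ht
  rcases le_total t₀ t with h | h
  · have hright {y : ℝ → E} (hy : ∀ t ∈ S, HasDerivWithinAt y (F (y t)) S t) :
        ∀ s ∈ Ico t₀ t, HasDerivWithinAt y (F (y s)) (Ici s) s := fun s hs ↦
      (hy s (hS.out ht₀ ht (Ico_subset_Icc_self hs))).mono_of_mem_nhdsWithin <|
        mem_of_superset (Icc_mem_nhdsGE hs.2) <|
          hS.out (hS.out ht₀ ht (Ico_subset_Icc_self hs)) ht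
    exact ODE_solution_unique_of_mem_Icc_right (v := fun _ ↦ F) (s := fun _ ↦ univ)
      (fun _ _ ↦ hF.lipschitzOnWith) (hcont hf ht₀ ht) (hright hf) (fun _ _ ↦ trivial)
      (hcont hg ht₀ ht) (hright hg) (fun _ _ ↦ trivial) h₀ (right_mem_Icc.2 h)
  · have hleft {y : ℝ → E} (hy : ∀ t ∈ S, HasDerivWithinAt y (F (y t)) S t) :
        ∀ s ∈ Ioc t t₀, HasDerivWithinAt y (F (y s)) (Iic s) s := fun s hs ↦
      (hy s (hS.out ht ht₀ (Ioc_subset_Icc_self hs))).mono_of_mem_nhdsWithin <|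
        mem_of_superset (Icc_mem_nhdsLE hs.1) <|
          hS.out ht (hS.out ht ht₀ (Ioc_subset_Icc_self hs))
    exact ODE_solution_unique_of_mem_Icc_left (v := fun _ ↦ F) (s := fun _ ↦ univ)
      (fun _ _ ↦ hF.lipschitzOnWith) (hcont hf ht ht₀) (hleft hf) (fun _ _ ↦ trivial)
      (hcont hg ht ht₀) (hleft hg) (fun _ _ ↦ trivial) h₀ (left_mem_Icc.2 h)

theorem eq_of_hasDerivAt_of_lipschitz_of_eq_zero (hF : LipschitzWith K F) {y : ℝ → E}
    (hy : ∀ t, HasDerivAt y (F (y t)) t) {t : ℝ} (h : F (y t) = 0) (s : ℝ) : y s = y t :=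
  eqOn_of_hasDerivWithinAt_of_lipschitz (g := fun _ ↦ y t) hF ordConnected_univ
    (fun u _ ↦ (hy u).hasDerivWithinAt)
    (fun u _ ↦ (hasDerivWithinAt_const u univ (y t)).congr_deriv h.symm) (mem_univ t) rfl
    (mem_univ s)

theorem hasDerivAt_ite_le {f g f' g' : ℝ → E} {a : ℝ}
    (hf : ∀ t ∈ Iic a, HasDerivWithinAt f (f' t) (Iic a) t)
    (hg : ∀ t ∈ Ici a, HasDerivWithinAt g (g' t) (Ici a) t) (h : f a = g a) (h' : f' a = g' a)
    (t : ℝ) :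
    HasDerivAt (fun s ↦ if s ≤ a then f s else g s) (if t ≤ a then f' t else g' t) t := by
  have hleft : EqOn (fun s ↦ if s ≤ a then f s else g s) f (Iic a) := fun s hs ↦ if_pos hs
  have hright : EqOn (fun s ↦ if s ≤ a then f s else g s) g (Ici a) := fun s (hs : a ≤ s) ↦ by
    rcases hs.eq_or_lt with rfl | hs
    · exact (if_pos le_rfl).trans h
    · exact if_neg hs.not_ge
  rcases lt_trichotomy t a with ht | rfl | ht
  · rw [if_pos ht.le]
    exact ((hf t ht.le).congr_of_mem hleft ht.le).hasDerivAt (Iic_mem_nhds ht)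
  · rw [if_pos le_rfl]
    have := ((hf t self_mem_Iic).congr_of_mem hleft self_mem_Iic).union
      (((hg t self_mem_Ici).congr_of_mem hright self_mem_Ici).congr_deriv h'.symm)
    rwa [Iic_union_Ici, hasDerivWithinAt_univ] at this
  · rw [if_neg ht.not_ge]
    exact ((hg t ht.le).congr_of_mem hright ht.le).hasDerivAt (Ici_mem_nhds ht)

theorem eqOn_zero_of_norm_deriv_le {D D' : ℝ → E} {a b M : ℝ}
    (hD : ∀ t ∈ Ioc a b, HasDerivWithinAt D (D' t) (Ioc a b) t)
    (hle : ∀ t ∈ Ioc a b, ‖D' t‖ ≤ M * ‖D t‖) (hlim : Tendsto D (nhdsWithin a (Ioi a)) (nhds 0)) :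
    EqOn D 0 (Ioc a b) := by
  intro t ht
  have hgronwall : ∀ c ∈ Ioo a t, ‖D t‖ ≤ ‖D c‖ * exp (M * (t - c)) := by
    intro c hc
    have hsub : Icc c t ⊆ Ioc a b := fun u hu ↦ ⟨hc.1.trans_le hu.1, hu.2.trans ht.2⟩
    rw [← gronwallBound_ε0]
    refine norm_le_gronwallBound_of_norm_deriv_right_le (f' := D')
      (fun u hu ↦ (hD u (hsub hu)).continuousWithinAt.mono hsub) (fun u hu ↦ ?_) le_rfl
      (fun u hu ↦ (hle u (hsub (Ico_subset_Icc_self hu))).trans_eq (add_zero _).symm) t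
      (right_mem_Icc.2 hc.2.le)
    exact (hD u (hsub (Ico_subset_Icc_self hu))).mono_of_mem_nhdsWithin <|
      mem_of_superset (Icc_mem_nhdsGE hu.2) fun v hv ↦ hsub ⟨hu.1.trans hv.1, hv.2⟩
  have hbound : Tendsto (fun c ↦ ‖D c‖ * exp (M * (t - c))) (nhdsWithin a (Ioi a)) (nhds 0) := by
    have hexp : Tendsto (fun c ↦ exp (M * (t - c))) (nhdsWithin a (Ioi a))
        (nhds (exp (M * (t - a)))) :=
      (Continuous.tendsto (by fun_prop) a).mono_left nhdsWithin_le_nhds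
    simpa using hlim.norm.mul hexp
  refine norm_le_zero_iff.1 (ge_of_tendsto hbound ?_)
  filter_upwards [Ioo_mem_nhdsGT ht.1] with c hc using hgronwall c hc

end ODE

section Legendre

theorem continuousOn_leftInvOn_of_strictMonoOn {z g : ℝ → ℝ} {S : Set ℝ} (hS : S.OrdConnected)
    (hz : StrictMonoOn z S) (hzc : ContinuousOn z S) (hg : LeftInvOn g z S) :
    ContinuousOn g (z '' S) := by
  have := hS
  have : (z '' S).OrdConnected := (hS.isPreconnected.image z hzc).ordConnected
  have hsymm : (z '' S).domRestrict g = (↑) ∘ (hz.orderIso z S).symm := by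
    ext ⟨_, s, hs, rfl⟩
    have : (hz.orderIso z S).symm ⟨z s, s, hs, rfl⟩ = ⟨s, hs⟩ :=
      (OrderIso.symm_apply_eq _).2 rfl
    simp [this, hg hs]
  rw [continuousOn_iff_continuous_domRestrict, hsymm]
  exact continuous_subtype_val.comp (hz.orderIso z S).symm.continuous

theorem image_Iic_eq_Ioc_of_strictMonoOn {z : ℝ → ℝ} {a l : ℝ} (hz : StrictMonoOn z (Iic a))
    (hzc : ContinuousOn z (Iic a)) (hlim : Tendsto z atBot (nhds l)) :
    z '' Iic a = Ioc l (z a) := by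
  have hgt : ∀ s ∈ Iic a, l < z s := fun s hs ↦ by
    have hpred : s - 1 ∈ Iic a := (sub_one_lt s).le.trans hs
    refine lt_of_le_of_lt (le_of_tendsto hlim ?_) (hz hpred hs (sub_one_lt s))
    filter_upwards [eventually_le_atBot (s - 1)] with t ht
    exact hz.monotoneOn (ht.trans hpred) hpred ht
  refine Subset.antisymm ?_ fun y hy ↦ ?_
  · rintro _ ⟨s, hs, rfl⟩
    exact ⟨hgt s hs, hz.monotoneOn hs self_mem_Iic hs⟩
  · obtain ⟨s, hsy, hs⟩ := ((hlim.eventually_lt_const hy.1).and (eventually_le_atBot a)).exists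
    exact isPreconnected_Iic.intermediate_value hs self_mem_Iic hzc ⟨hsy.le, hy.2⟩

theorem tendsto_leftInvOn_nhdsGT_atBot {z g : ℝ → ℝ} {a l : ℝ} (hz : StrictMonoOn z (Iic a))
    (hzc : ContinuousOn z (Iic a)) (hlim : Tendsto z atBot (nhds l)) (hg : LeftInvOn g z (Iic a)) :
    Tendsto g (nhdsWithin l (Ioi l)) atBot := by
  refine tendsto_atBot.2 fun b ↦ ?_
  have hsub : Iic (min a b) ⊆ Iic a := Iic_subset_Iic.2 (min_le_left a b)
  have himage := image_Iic_eq_Ioc_of_strictMonoOn (hz.mono hsub) (hzc.mono hsub) hlim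
  have hlt : l < z (min a b) :=
    (himage.subset (mem_image_of_mem z (self_mem_Iic : min a b ∈ Iic (min a b)))).1
  filter_upwards [Ioc_mem_nhdsGT hlt] with y hy
  obtain ⟨s, hs, rfl⟩ := himage.superset hy
  rw [hg (hsub hs)]
  exact hs.trans (min_le_right a b)

variable {S : Set ℝ} {z X X' T : ℝ → ℝ}

theorem add_mul_le_add_mul_of_deriv_eq_neg_mul (hS : S.OrdConnected) (hz : MonotoneOn z S)
    (hX : ∀ s ∈ S, HasDerivWithinAt X (X' s) S s) (hX' : ∀ s ∈ S, X' s ≤ 0)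
    (hT : ∀ s ∈ S, HasDerivWithinAt T (-(z s * X' s)) S s) {s t : ℝ} (hs : s ∈ S) (ht : t ∈ S) :
    T t + z t * X t ≤ T s + z t * X s := by
  have hderiv : ∀ u ∈ S, HasDerivWithinAt (fun u ↦ T u + z t * X u) ((z t - z u) * X' u) S u :=
    fun u hu ↦ ((hT u hu).add ((hX u hu).const_mul (z t))).congr_deriv (by ring)
  have hcont : ContinuousOn (fun u ↦ T u + z t * X u) S := fun u hu ↦
    (hderiv u hu).continuousWithinAt
  rcases le_total s t with h | h
  · have hsub : Icc s t ⊆ S := hS.out hs ht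
    refine antitoneOn_of_hasDerivWithinAt_nonpos (convex_Icc s t) (hcont.mono hsub)
      (fun u hu ↦ (hderiv u (hsub (interior_subset hu))).mono (interior_subset.trans hsub))
      (fun u hu ↦ ?_) (left_mem_Icc.2 h) (right_mem_Icc.2 h) h
    have hu := interior_subset hu
    exact mul_nonpos_of_nonneg_of_nonpos (sub_nonneg.2 (hz (hsub hu) ht hu.2)) (hX' u (hsub hu))
  · have hsub : Icc t s ⊆ S := hS.out ht hs
    refine monotoneOn_of_hasDerivWithinAt_nonneg (convex_Icc t s) (hcont.mono hsub)
      (fun u hu ↦ (hderiv u (hsub (interior_subset hu))).mono (interior_subset.trans hsub))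
      (fun u hu ↦ ?_) (left_mem_Icc.2 h) (right_mem_Icc.2 h) h
    have hu := interior_subset hu
    exact mul_nonneg_of_nonpos_of_nonpos (sub_nonpos.2 (hz ht (hsub hu) hu.1)) (hX' u (hsub hu))

/-- The difference quotient of the Legendre transform `T + z X`, in the variable `z`, is squeezed
between the values of `X` at the two ends. -/
theorem hasDerivWithinAt_add_mul_comp_leftInvOn (hS : S.OrdConnected) (hz : StrictMonoOn z S)
    (hzc : ContinuousOn z S) (hX : ∀ s ∈ S, HasDerivWithinAt X (X' s) S s)
    (hX' : ∀ s ∈ S, X' s ≤ 0) (hT : ∀ s ∈ S, HasDerivWithinAt T (-(z s * X' s)) S s)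
    {g : ℝ → ℝ} (hg : LeftInvOn g z S) {ζ : ℝ} (hζ : ζ ∈ z '' S) :
    HasDerivWithinAt (fun ζ ↦ T (g ζ) + ζ * X (g ζ)) (X (g ζ)) (z '' S) ζ := by
  have hXg : ContinuousOn (X ∘ g) (z '' S) :=
    ContinuousOn.comp (fun s hs ↦ (hX s hs).continuousWithinAt)
      (continuousOn_leftInvOn_of_strictMonoOn hS hz hzc hg) (mapsTo_image_iff.2 fun s hs ↦ by
        rwa [Function.comp_apply, hg hs])
  have hlim : Tendsto (fun η ↦ X (g η) - X (g ζ)) (nhdsWithin ζ (z '' S)) (nhds 0) :=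
    tendsto_sub_nhds_zero_iff.2 (hXg ζ hζ)
  rw [hasDerivWithinAt_iff_isLittleO]
  refine Asymptotics.IsLittleO.of_bound fun ε hε ↦ ?_
  filter_upwards [self_mem_nhdsWithin,
    (tendsto_zero_iff_norm_tendsto_zero.1 hlim).eventually_le_const hε] with η hη hle
  obtain ⟨s, hs, rfl⟩ := hζ
  obtain ⟨t, ht, rfl⟩ := hη
  have hup := add_mul_le_add_mul_of_deriv_eq_neg_mul hS hz.monotoneOn hX hX' hT hs ht
  have hlow := add_mul_le_add_mul_of_deriv_eq_neg_mul hS hz.monotoneOn hX hX' hT ht hs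
  rw [hg hs, hg ht] at *
  refine le_trans ?_ (mul_le_mul_of_nonneg_right hle (norm_nonneg _))
  rw [← norm_mul, norm_eq_abs, norm_eq_abs, smul_eq_mul]
  exact abs_le_abs_of_nonpos (by linarith) (by linarith)

end Legendre

section ClampedRoot

/-- `w ∈ [a, b]` is the clamped solution of `g w = P`: for increasing `g` it solves the equation,
unless the solution lies outside `[a, b]`, in which case `w` is the nearest endpoint. It turns
the implicit relation between stress and stretch into a globally defined Lipschitz function. -/
structure IsClampedRoot (g : ℝ → ℝ) (a b P w : ℝ) : Prop where
  mem_Icc : w ∈ Icc a b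
  map_le : a < w → g w ≤ P
  le_map : w < b → P ≤ g w

variable {g : ℝ → ℝ} {a b P w : ℝ}

theorem exists_isClampedRoot (hab : a ≤ b) (hg : ContinuousOn g (Icc a b)) (P : ℝ) :
    ∃ w, IsClampedRoot g a b P w := by
  rcases le_or_gt P (g a) with ha | ha
  · exact ⟨a, left_mem_Icc.2 hab, fun h ↦ absurd h (lt_irrefl a), fun _ ↦ ha⟩
  rcases le_or_gt (g b) P with hb | hb
  · exact ⟨b, right_mem_Icc.2 hab, fun _ ↦ hb, fun h ↦ absurd h (lt_irrefl b)⟩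
  obtain ⟨w, hw, hwP⟩ := intermediate_value_Icc hab hg ⟨ha.le, hb.le⟩
  exact ⟨w, hw, fun _ ↦ hwP.le, fun _ ↦ hwP.ge⟩

theorem IsClampedRoot.eq_of_map {v : ℝ} (h : IsClampedRoot g a b (g v) w)
    (hg : StrictMonoOn g (Icc a b)) (hv : v ∈ Icc a b) : w = v := by
  rcases lt_trichotomy w v with hlt | heq | hgt
  · exact absurd (h.le_map (hlt.trans_le hv.2)) (hg h.mem_Icc hv hlt).not_ge
  · exact heq
  · exact absurd (h.map_le (hv.1.trans_lt hgt)) (hg hv h.mem_Icc hgt).not_ge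

end ClampedRoot

section Stress

/-- The part `κ w^(n-1) + h' (w e^(n x))`, `n = k + 2`, of the modified Cauchy stress at the
stretches `v = e^x` and `q = w v`: the stress without its logarithmic term. -/
def reducedStress (k : ℕ) (κ : ℝ) (h' : ℝ → ℝ) (w x : ℝ) : ℝ :=
  κ * w ^ (k + 1) + h' (w * exp ((k + 2) * x))

/-- The modified Cauchy stress `T̂`, for `n = k + 2`, at the stretches `v = e^x` and `q = w v`. -/
def cauchyStress (k : ℕ) (κ : ℝ) (h' : ℝ → ℝ) (w x : ℝ) : ℝ :=
  reducedStress k κ h' w x + (k + 1) * κ * (1 / (k + 2) + x)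

/-- The modified equilibrium equation as an autonomous system in `s = ln R`: the derivatives of
the reduced stress and of `x = ln (r / R)`, as functions of `w = R r' / r`, for `n = k + 2`. -/
def strainField (k : ℕ) (κ : ℝ) (w : ℝ) : ℝ × ℝ :=
  ((k + 1) * κ * (1 - w ^ (k + 2)), w - 1)

variable {k : ℕ} {κ : ℝ} {h' : ℝ → ℝ}

theorem strictMonoOn_reducedStress (hκ : 0 < κ) (hmono : MonotoneOn h' (Ioi 0)) (x : ℝ) :
    StrictMonoOn (fun w ↦ reducedStress k κ h' w x) (Ioi 0) := by
  intro w₁ h₁ w₂ h₂ hlt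
  rw [mem_Ioi] at h₁ h₂
  have hpow : w₁ ^ (k + 1) < w₂ ^ (k + 1) := by gcongr
  have hh' : h' (w₁ * exp ((k + 2) * x)) ≤ h' (w₂ * exp ((k + 2) * x)) :=
    hmono (mem_Ioi.2 (by positivity)) (mem_Ioi.2 (by positivity)) (by gcongr)
  exact add_lt_add_of_lt_of_le (by gcongr) hh'

theorem monotone_reducedStress (hmono : MonotoneOn h' (Ioi 0)) {w : ℝ} (hw : 0 < w) :
    Monotone (reducedStress k κ h' w) := fun x₁ x₂ hle ↦
  add_le_add_right (hmono (mem_Ioi.2 (by positivity)) (mem_Ioi.2 (by positivity)) (by gcongr)) _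

theorem continuousOn_reducedStress (hc : ContinuousOn h' (Ioi 0)) {S : Set ℝ} {x w : ℝ → ℝ}
    (hw : ContinuousOn w S) (hx : ContinuousOn x S) (hpos : ∀ s ∈ S, 0 < w s) :
    ContinuousOn (fun s ↦ reducedStress k κ h' (w s) (x s)) S :=
  (continuousOn_const.mul (hw.pow _)).add <|
    hc.comp (hw.mul (continuousOn_const.mul hx).rexp) fun s hs ↦ mul_pos (hpos s hs) (exp_pos _)

theorem strictMonoOn_cauchyStress (hκ : 0 < κ) (hmono : MonotoneOn h' (Ioi 0)) (x : ℝ) :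
    StrictMonoOn (fun w ↦ cauchyStress k κ h' w x) (Ioi 0) :=
  (strictMonoOn_reducedStress hκ hmono x).add_const _

theorem strictMono_cauchyStress (hκ : 0 < κ) (hmono : MonotoneOn h' (Ioi 0)) {w : ℝ}
    (hw : 0 < w) : StrictMono (cauchyStress k κ h' w) := fun x₁ x₂ hlt ↦
  add_lt_add_of_le_of_lt (monotone_reducedStress hmono hw hlt.le) (by gcongr)

theorem continuous_cauchyStress (hc : ContinuousOn h' (Ioi 0)) {w : ℝ} (hw : 0 < w) :
    Continuous (cauchyStress k κ h' w) :=
  (continuousOn_univ.1 <| continuousOn_reducedStress hc continuousOn_const continuousOn_id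
    fun _ _ ↦ hw).add (by fun_prop)

theorem tendsto_cauchyStress_atTop (hκ : 0 < κ) (hmono : MonotoneOn h' (Ioi 0)) {w : ℝ}
    (hw : 0 < w) : Tendsto (cauchyStress k κ h' w) atTop atTop :=
  tendsto_atTop_add_left_of_le' _ (reducedStress k κ h' w 0)
    ((eventually_ge_atTop 0).mono fun _ hx ↦ monotone_reducedStress hmono hw hx)
    ((tendsto_atTop_add_const_left _ _ tendsto_id).const_mul_atTop (by positivity))

theorem tendsto_cauchyStress_atBot (hκ : 0 < κ) (hmono : MonotoneOn h' (Ioi 0)) {w : ℝ}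
    (hw : 0 < w) : Tendsto (cauchyStress k κ h' w) atBot atBot :=
  tendsto_atBot_add_left_of_ge' _ (reducedStress k κ h' w 0)
    ((eventually_le_atBot 0).mono fun _ hx ↦ monotone_reducedStress hmono hw hx)
    ((tendsto_atBot_add_const_left _ _ tendsto_id).const_mul_atBot (by positivity))

theorem IsClampedRoot.eq_of_reducedStress (hκ : 0 < κ) (hmono : MonotoneOn h' (Ioi 0))
    {a b v w x : ℝ} (ha : 0 < a) (hv : v ∈ Icc a b)
    (h : IsClampedRoot (fun w ↦ reducedStress k κ h' w x) a b (reducedStress k κ h' v x) w) :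
    w = v :=
  h.eq_of_map ((strictMonoOn_reducedStress hκ hmono x).mono fun _ hu ↦ ha.trans_le hu.1) hv

theorem pow_mul_sub_le_pow_succ_sub_pow_succ {a w₁ w₂ : ℝ} (ha : 0 ≤ a) (ha₁ : a ≤ w₁)
    (h₂ : 0 ≤ w₂) (hle : w₂ ≤ w₁) : a ^ k * (w₁ - w₂) ≤ w₁ ^ (k + 1) - w₂ ^ (k + 1) := by
  have : 0 ≤ w₁ - w₂ := sub_nonneg.2 hle
  calc a ^ k * (w₁ - w₂) ≤ w₁ ^ k * (w₁ - w₂) := by gcongr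
    _ = w₁ ^ (k + 1) - w₁ ^ k * w₂ := by ring
    _ ≤ w₁ ^ (k + 1) - w₂ ^ (k + 1) := by rw [pow_succ w₂]; gcongr

theorem sub_le_mul_log_div {b w₁ w₂ : ℝ} (h₂ : 0 < w₂) (hle : w₂ ≤ w₁) (hb : w₁ ≤ b) :
    w₁ - w₂ ≤ b * log (w₁ / w₂) := by
  have h₁ : 0 < w₁ := h₂.trans_le hle
  have hlog : 0 ≤ log (w₁ / w₂) := log_nonneg ((one_le_div h₂).2 hle)
  calc w₁ - w₂ = w₁ * (1 - (w₁ / w₂)⁻¹) := by field_simp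
    _ ≤ w₁ * log (w₁ / w₂) := by gcongr; exact one_sub_inv_le_log_of_pos (by positivity)
    _ ≤ b * log (w₁ / w₂) := by gcongr

theorem sub_le_of_isClampedRoot_reducedStress (hκ : 0 < κ) (hmono : MonotoneOn h' (Ioi 0))
    {a b w₁ w₂ P₁ P₂ x₁ x₂ : ℝ} (ha : 0 < a)
    (h₁ : IsClampedRoot (fun w ↦ reducedStress k κ h' w x₁) a b P₁ w₁)
    (h₂ : IsClampedRoot (fun w ↦ reducedStress k κ h' w x₂) a b P₂ w₂) :
    w₁ - w₂ ≤ (κ * a ^ k)⁻¹ * |P₁ - P₂| + b * (k + 2) * |x₁ - x₂| := by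
  have hw₂ : 0 < w₂ := ha.trans_le h₂.mem_Icc.1
  have hb : 0 < b := hw₂.trans_le h₂.mem_Icc.2
  have hP : 0 ≤ (κ * a ^ k)⁻¹ * |P₁ - P₂| := by positivity
  have hx : 0 ≤ b * (k + 2) * |x₁ - x₂| := by positivity
  rcases le_or_gt w₁ w₂ with hle | hlt
  · linarith
  have hw₁ : 0 < w₁ := hw₂.trans hlt
  rcases le_or_gt (w₂ * exp ((k + 2) * x₂)) (w₁ * exp ((k + 2) * x₁)) with hδ | hδ
  · have hpow : κ * (w₁ ^ (k + 1) - w₂ ^ (k + 1)) ≤ P₁ - P₂ := by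
      have hP₁ := h₁.map_le (h₂.mem_Icc.1.trans_lt hlt)
      have hP₂ := h₂.le_map (hlt.trans_le h₁.mem_Icc.2)
      have hh' := hmono (mem_Ioi.2 (by positivity)) (mem_Ioi.2 (by positivity)) hδ
      simp only [reducedStress] at hP₁ hP₂
      linarith
    have hle : w₁ - w₂ ≤ (κ * a ^ k)⁻¹ * |P₁ - P₂| := by
      rw [inv_mul_eq_div, le_div_iff₀' (by positivity), mul_assoc]
      refine le_trans ?_ (hpow.trans (le_abs_self _))
      gcongr
      exact pow_mul_sub_le_pow_succ_sub_pow_succ ha.le h₁.mem_Icc.1 hw₂.le hlt.le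
    linarith
  · have hlog : log (w₁ / w₂) ≤ (k + 2) * |x₁ - x₂| := by
      have hexp := log_lt_log (by positivity) hδ
      rw [log_mul hw₁.ne' (exp_pos _).ne', log_mul hw₂.ne' (exp_pos _).ne', log_exp,
        log_exp] at hexp
      have habs : (k + 2) * -|x₁ - x₂| ≤ (k + 2) * (x₁ - x₂) := by gcongr; exact neg_abs_le _
      rw [log_div hw₁.ne' hw₂.ne']
      linarith
    have hle : w₁ - w₂ ≤ b * (k + 2) * |x₁ - x₂| := by
      rw [mul_assoc]
      exact (sub_le_mul_log_div hw₂ hlt.le h₁.mem_Icc.2).trans (by gcongr)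
    linarith

theorem exists_lipschitzWith_isClampedRoot_reducedStress (hκ : 0 < κ)
    (hmono : MonotoneOn h' (Ioi 0)) (hc : ContinuousOn h' (Ioi 0)) {a b : ℝ} (ha : 0 < a)
    (hab : a ≤ b) :
    ∃ W : ℝ × ℝ → ℝ, (∃ K : ℝ≥0, LipschitzWith K W) ∧
      ∀ P x, IsClampedRoot (fun w ↦ reducedStress k κ h' w x) a b P (W (P, x)) := by
  have hcont (x : ℝ) : ContinuousOn (fun w ↦ reducedStress k κ h' w x) (Icc a b) :=
    continuousOn_reducedStress hc continuousOn_id continuousOn_const fun w hw ↦ ha.trans_le hw.1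
  choose W hW using fun y : ℝ × ℝ ↦ exists_isClampedRoot hab (hcont y.2) y.1
  have hb : 0 < b := ha.trans_le hab
  refine ⟨W, ⟨((κ * a ^ k)⁻¹ + b * (k + 2)).toNNReal, ?_⟩, fun P x ↦ hW (P, x)⟩
  refine LipschitzWith.of_le_add_mul' _ fun y z ↦ ?_
  have h := sub_le_of_isClampedRoot_reducedStress hκ hmono ha (hW y) (hW z)
  have h₁ : |y.1 - z.1| ≤ dist y z := le_max_left _ _
  have h₂ : |y.2 - z.2| ≤ dist y z := le_max_right _ _
  calc W y ≤ W z + ((κ * a ^ k)⁻¹ * |y.1 - z.1| + b * (k + 2) * |y.2 - z.2|) := by linarith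
    _ ≤ W z + ((κ * a ^ k)⁻¹ * dist y z + b * (k + 2) * dist y z) := by gcongr
    _ = _ := by ring

theorem exists_lipschitzWith_strainField_comp {W : ℝ × ℝ → ℝ} {K : ℝ≥0} (hW : LipschitzWith K W)
    {a b : ℝ} (hmem : ∀ y, W y ∈ Icc a b) :
    ∃ K' L : ℝ≥0, LipschitzWith K' (fun y ↦ strainField k κ (W y)) ∧
      ∀ y, ‖strainField k κ (W y)‖ ≤ L := by
  have hsmooth : ContDiff ℝ 1 (strainField k κ) := by unfold strainField; fun_prop
  obtain ⟨C, hC⟩ := hsmooth.locallyLipschitz.locallyLipschitzOn (s := Icc a b)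
    |>.exists_lipschitzOnWith_of_compact isCompact_Icc
  obtain ⟨L, hL⟩ := isCompact_Icc.exists_bound_of_continuousOn
    (hsmooth.continuous.continuousOn (s := Icc a b))
  refine ⟨C * K, L.toNNReal, ?_, fun y ↦ (hL _ (hmem y)).trans (le_coe_toNNReal L)⟩
  exact lipschitzOnWith_univ.1 (hC.comp hW.lipschitzOnWith fun y _ ↦ hmem y)

end Stress

/-- A solution on `S` of the modified equilibrium equation in the variables `s = ln R`,
`x = ln (r / R)`, `w = R r' / r`, for `n = k + 2`. The equation is imposed on the reduced stress,
so `w` itself need not be differentiable. -/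
structure StrainPath (k : ℕ) (κ : ℝ) (h' : ℝ → ℝ) (S : Set ℝ) (x w : ℝ → ℝ) : Prop where
  pos : ∀ s ∈ S, 0 < w s
  continuousOn_w : ContinuousOn w S
  hasDeriv_x : ∀ s ∈ S, HasDerivWithinAt x (strainField k κ (w s)).2 S s
  hasDeriv_reducedStress : ∀ s ∈ S,
    HasDerivWithinAt (fun s ↦ reducedStress k κ h' (w s) (x s)) (strainField k κ (w s)).1 S s

namespace StrainPath

variable {k : ℕ} {κ : ℝ} {h' : ℝ → ℝ} {S : Set ℝ} {x w x₁ x₂ w₁ w₂ : ℝ → ℝ}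

theorem mono {S' : Set ℝ} (hp : StrainPath k κ h' S x w) (hS : S' ⊆ S) :
    StrainPath k κ h' S' x w where
  pos s hs := hp.pos s (hS hs)
  continuousOn_w := hp.continuousOn_w.mono hS
  hasDeriv_x s hs := (hp.hasDeriv_x s (hS hs)).mono hS
  hasDeriv_reducedStress s hs := (hp.hasDeriv_reducedStress s (hS hs)).mono hS

theorem const (S : Set ℝ) (x₀ : ℝ) : StrainPath k κ h' S (fun _ ↦ x₀) (fun _ ↦ 1) where
  pos _ _ := one_pos
  continuousOn_w := continuousOn_const
  hasDeriv_x s _ := by simpa [strainField] using hasDerivWithinAt_const s S x₀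
  hasDeriv_reducedStress s _ := by simpa [strainField] using hasDerivWithinAt_const s S _

theorem comp_add_const (hp : StrainPath k κ h' univ x w) (a : ℝ) :
    StrainPath k κ h' univ (fun s ↦ x (s + a)) (fun s ↦ w (s + a)) where
  pos s _ := hp.pos _ trivial
  continuousOn_w := hp.continuousOn_w.comp (by fun_prop) fun _ _ ↦ trivial
  hasDeriv_x s _ := ((hp.hasDeriv_x (s + a) trivial).hasDerivAt univ_mem
    |>.comp_add_const s a).hasDerivWithinAt
  hasDeriv_reducedStress s _ := ((hp.hasDeriv_reducedStress (s + a) trivial).hasDerivAt univ_mem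
    |>.comp_add_const s a).hasDerivWithinAt

theorem continuousOn_x (hp : StrainPath k κ h' S x w) : ContinuousOn x S := fun s hs ↦
  (hp.hasDeriv_x s hs).continuousWithinAt

theorem hasDeriv_cauchyStress (hp : StrainPath k κ h' S x w) {s : ℝ} (hs : s ∈ S) :
    HasDerivWithinAt (fun s ↦ cauchyStress k κ h' (w s) (x s))
      ((k + 1) * κ * (w s * (1 - w s ^ (k + 1)))) S s :=
  ((hp.hasDeriv_reducedStress s hs).add
    (((hp.hasDeriv_x s hs).const_add (1 / ((k : ℝ) + 2))).const_mul ((k + 1) * κ))).congr_deriv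
      (by simp only [strainField]; ring)

theorem continuousOn_cauchyStress (hp : StrainPath k κ h' S x w) :
    ContinuousOn (fun s ↦ cauchyStress k κ h' (w s) (x s)) S := fun _ hs ↦
  (hp.hasDeriv_cauchyStress hs).continuousWithinAt

theorem eqOn_of_mem_Icc (hκ : 0 < κ) (hmono : MonotoneOn h' (Ioi 0))
    (hc : ContinuousOn h' (Ioi 0)) (hS : S.OrdConnected) (hp₁ : StrainPath k κ h' S x₁ w₁)
    (hp₂ : StrainPath k κ h' S x₂ w₂) {a b : ℝ} (ha : 0 < a) (hab₁ : ∀ s ∈ S, w₁ s ∈ Icc a b)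
    (hab₂ : ∀ s ∈ S, w₂ s ∈ Icc a b) {s₀ : ℝ} (hs₀ : s₀ ∈ S) (hx : x₁ s₀ = x₂ s₀)
    (hw : w₁ s₀ = w₂ s₀) : EqOn x₁ x₂ S ∧ EqOn w₁ w₂ S := by
  obtain ⟨W, ⟨K, hWK⟩, hW⟩ := exists_lipschitzWith_isClampedRoot_reducedStress (k := k) hκ hmono
    hc ha ((hab₁ s₀ hs₀).1.trans (hab₁ s₀ hs₀).2)
  obtain ⟨C, -, hC, -⟩ :=
    exists_lipschitzWith_strainField_comp (k := k) (κ := κ) hWK fun y ↦ (hW y.1 y.2).mem_Icc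
  have hroot {x w : ℝ → ℝ} (hwab : ∀ s ∈ S, w s ∈ Icc a b) :
      ∀ s ∈ S, W (reducedStress k κ h' (w s) (x s), x s) = w s := fun s hs ↦
    (hW _ (x s)).eq_of_reducedStress hκ hmono ha (hwab s hs)
  have hode {x w : ℝ → ℝ} (hp : StrainPath k κ h' S x w) (hwab : ∀ s ∈ S, w s ∈ Icc a b) :
      ∀ s ∈ S, HasDerivWithinAt (fun s ↦ (reducedStress k κ h' (w s) (x s), x s))
        (strainField k κ (W (reducedStress k κ h' (w s) (x s), x s))) S s := fun s hs ↦ by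
    rw [hroot hwab s hs]
    exact (hp.hasDeriv_reducedStress s hs).prodMk (hp.hasDeriv_x s hs)
  have heq := eqOn_of_hasDerivWithinAt_of_lipschitz hC hS (hode hp₁ hab₁) (hode hp₂ hab₂) hs₀
    (by rw [hx, hw])
  exact ⟨fun s hs ↦ congrArg Prod.snd (heq hs), fun s hs ↦
    (hroot (x := x₁) hab₁ s hs).symm.trans
      ((congrArg W (heq hs)).trans (hroot (x := x₂) hab₂ s hs))⟩

theorem eqOn (hκ : 0 < κ) (hmono : MonotoneOn h' (Ioi 0)) (hc : ContinuousOn h' (Ioi 0))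
    (hS : S.OrdConnected) (hp₁ : StrainPath k κ h' S x₁ w₁) (hp₂ : StrainPath k κ h' S x₂ w₂)
    {s₀ : ℝ} (hs₀ : s₀ ∈ S) (hx : x₁ s₀ = x₂ s₀) (hw : w₁ s₀ = w₂ s₀) :
    EqOn x₁ x₂ S ∧ EqOn w₁ w₂ S := by
  suffices ∀ t ∈ S, x₁ t = x₂ t ∧ w₁ t = w₂ t from
    ⟨fun t ht ↦ (this t ht).1, fun t ht ↦ (this t ht).2⟩
  intro t ht
  have hsub : uIcc s₀ t ⊆ S := hS.uIcc_subset hs₀ ht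
  have hbounds {x w : ℝ → ℝ} (hp : StrainPath k κ h' S x w) :
      ∃ a b, 0 < a ∧ ∀ s ∈ uIcc s₀ t, w s ∈ Icc a b := by
    have hw := hp.continuousOn_w.mono hsub
    obtain ⟨m, hm, hmin⟩ := isCompact_uIcc.exists_isMinOn nonempty_uIcc hw
    obtain ⟨M, -, hmax⟩ := isCompact_uIcc.exists_isMaxOn nonempty_uIcc hw
    exact ⟨w m, w M, hp.pos m (hsub hm), fun s hs ↦ ⟨hmin hs, hmax hs⟩⟩
  obtain ⟨a₁, b₁, ha₁, hab₁⟩ := hbounds hp₁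
  obtain ⟨a₂, b₂, ha₂, hab₂⟩ := hbounds hp₂
  obtain ⟨hx, hw⟩ := (hp₁.mono hsub).eqOn_of_mem_Icc hκ hmono hc ordConnected_uIcc
    (hp₂.mono hsub) (lt_min ha₁ ha₂)
    (fun s hs ↦ Icc_subset_Icc (min_le_left _ _) (le_max_left _ _) (hab₁ s hs))
    (fun s hs ↦ Icc_subset_Icc (min_le_right _ _) (le_max_right _ _) (hab₂ s hs))
    left_mem_uIcc hx hw
  exact ⟨hx right_mem_uIcc, hw right_mem_uIcc⟩

theorem lt_one_of_exists (hκ : 0 < κ) (hmono : MonotoneOn h' (Ioi 0))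
    (hc : ContinuousOn h' (Ioi 0)) (hS : S.OrdConnected) (hp : StrainPath k κ h' S x w)
    (hlt : ∃ s ∈ S, w s < 1) : ∀ s ∈ S, w s < 1 := by
  obtain ⟨s, hs, hlt⟩ := hlt
  by_contra! ⟨t, ht, hge⟩
  obtain ⟨u, hu, hu₁⟩ : ∃ u ∈ S, w u = 1 :=
    hS.isPreconnected.intermediate_value hs ht hp.continuousOn_w ⟨hlt.le, hge⟩
  exact hlt.ne ((hp.eqOn hκ hmono hc hS (const S (x u)) hu rfl hu₁).2 hs)

theorem strictAntiOn_x (hS : Convex ℝ S) (hp : StrainPath k κ h' S x w)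
    (hlt : ∀ s ∈ S, w s < 1) : StrictAntiOn x S :=
  strictAntiOn_of_hasDerivWithinAt_neg hS hp.continuousOn_x
    (fun s hs ↦ (hp.hasDeriv_x s (interior_subset hs)).mono interior_subset)
    fun s hs ↦ sub_neg.2 (hlt s (interior_subset hs))

protected theorem strictMonoOn_reducedStress (hκ : 0 < κ) (hS : Convex ℝ S)
    (hp : StrainPath k κ h' S x w) (hlt : ∀ s ∈ S, w s < 1) :
    StrictMonoOn (fun s ↦ reducedStress k κ h' (w s) (x s)) S := by
  refine strictMonoOn_of_hasDerivWithinAt_pos hS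
    (fun s hs ↦ (hp.hasDeriv_reducedStress s hs).continuousWithinAt)
    (fun s hs ↦ (hp.hasDeriv_reducedStress s (interior_subset hs)).mono interior_subset)
    fun s hs ↦ ?_
  have hs := interior_subset hs
  exact mul_pos (by positivity) (sub_pos.2 (pow_lt_one₀ (hp.pos s hs).le (hlt s hs) (by simp)))

protected theorem strictMonoOn_cauchyStress (hκ : 0 < κ) (hS : Convex ℝ S)
    (hp : StrainPath k κ h' S x w) (hlt : ∀ s ∈ S, w s < 1) :
    StrictMonoOn (fun s ↦ cauchyStress k κ h' (w s) (x s)) S := by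
  refine strictMonoOn_of_hasDerivWithinAt_pos hS hp.continuousOn_cauchyStress
    (fun s hs ↦ (hp.hasDeriv_cauchyStress (interior_subset hs)).mono interior_subset)
    fun s hs ↦ ?_
  have hs := interior_subset hs
  have hw := hp.pos s hs
  have : w s ^ (k + 1) < 1 := pow_lt_one₀ hw.le (hlt s hs) (by simp)
  have := sub_pos.2 this
  positivity

theorem strictMonoOn_w (hκ : 0 < κ) (hmono : MonotoneOn h' (Ioi 0)) (hS : Convex ℝ S)
    (hp : StrainPath k κ h' S x w) (hlt : ∀ s ∈ S, w s < 1) : StrictMonoOn w S := by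
  intro s hs t ht hst
  by_contra! hle
  have : reducedStress k κ h' (w t) (x t) ≤ reducedStress k κ h' (w s) (x s) :=
    ((strictMonoOn_reducedStress hκ hmono (x t)).monotoneOn (hp.pos t ht) (hp.pos s hs) hle).trans
      (monotone_reducedStress hmono (hp.pos s hs) (hp.strictAntiOn_x hS hlt hs ht hst).le)
  exact this.not_gt (hp.strictMonoOn_reducedStress hκ hS hlt hs ht hst)

theorem antitoneOn_x_sub_mul (hS : Convex ℝ S) (hp : StrainPath k κ h' S x w) {c : ℝ}
    (hle : ∀ s ∈ S, w s ≤ c) : AntitoneOn (fun s ↦ x s - (c - 1) * s) S := by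
  have hderiv : ∀ s ∈ S, HasDerivWithinAt (fun s ↦ x s - (c - 1) * s) (w s - c) S s :=
    fun s hs ↦ ((hp.hasDeriv_x s hs).sub ((hasDerivWithinAt_id s S).const_mul (c - 1))).congr_deriv
      (by simp only [strainField]; ring)
  exact antitoneOn_of_hasDerivWithinAt_nonpos hS (fun s hs ↦ (hderiv s hs).continuousWithinAt)
    (fun s hs ↦ (hderiv s (interior_subset hs)).mono interior_subset)
    fun s hs ↦ sub_nonpos.2 (hle s (interior_subset hs))

theorem tendsto_x_atBot (hκ : 0 < κ) (hmono : MonotoneOn h' (Ioi 0))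
    (hp : StrainPath k κ h' (Iic 0) x w) (hlt : ∀ s ∈ Iic (0 : ℝ), w s < 1) :
    Tendsto x atBot atTop := by
  have hanti := hp.antitoneOn_x_sub_mul (convex_Iic 0) fun s hs ↦
    (hp.strictMonoOn_w hκ hmono (convex_Iic 0) hlt).monotoneOn hs self_mem_Iic hs
  refine tendsto_atTop_mono' _ ?_ (tendsto_atTop_add_const_left _ (x 0)
    (tendsto_id.const_mul_atBot_of_neg (sub_neg.2 (hlt 0 self_mem_Iic))))
  filter_upwards [eventually_le_atBot 0] with s hs
  have := hanti hs self_mem_Iic hs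
  simp only [id]
  linarith

theorem tendsto_w_atBot (hκ : 0 < κ) (hmono : MonotoneOn h' (Ioi 0))
    (hp : StrainPath k κ h' (Iic 0) x w) (hlt : ∀ s ∈ Iic (0 : ℝ), w s < 1)
    (hT : Tendsto (fun s ↦ cauchyStress k κ h' (w s) (x s)) atBot (nhds 0)) :
    Tendsto w atBot (nhds 0) := by
  refine tendsto_order.2 ⟨fun c hc ↦ ?_, fun c hc ↦ ?_⟩
  · filter_upwards [eventually_le_atBot 0] with s hs using hc.trans (hp.pos s hs)
  obtain ⟨t, ht, htc⟩ : ∃ t ≤ 0, w t < c := by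
    by_contra! hge
    refine not_tendsto_nhds_of_tendsto_atTop (tendsto_atTop_mono' _ ?_
      ((tendsto_cauchyStress_atTop (k := k) hκ hmono hc).comp
        (hp.tendsto_x_atBot hκ hmono hlt))) 0 hT
    filter_upwards [eventually_le_atBot 0] with s hs
    exact (strictMonoOn_cauchyStress hκ hmono (x s)).monotoneOn hc (hp.pos s hs) (hge s hs)
  filter_upwards [eventually_le_atBot t] with s hs
  exact ((hp.strictMonoOn_w hκ hmono (convex_Iic 0) hlt).monotoneOn (hs.trans ht) ht hs).trans_lt
    htc

theorem cauchyStress_pos (hκ : 0 < κ) (hp : StrainPath k κ h' (Iic 0) x w)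
    (hlt : ∀ s ∈ Iic (0 : ℝ), w s < 1)
    (hT : Tendsto (fun s ↦ cauchyStress k κ h' (w s) (x s)) atBot (nhds 0)) :
    0 < cauchyStress k κ h' (w 0) (x 0) := by
  have hmonoT := hp.strictMonoOn_cauchyStress hκ (convex_Iic 0) hlt
  have hneg : (-1 : ℝ) ∈ Iic 0 := by norm_num
  refine lt_of_le_of_lt (le_of_tendsto hT ?_) (hmonoT hneg self_mem_Iic (by norm_num))
  filter_upwards [eventually_le_atBot (-1)] with s hs
  exact hmonoT.monotoneOn (hs.trans hneg) hneg hs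

theorem lt_one_of_cauchyStress_pos (hκ : 0 < κ) (hmono : MonotoneOn h' (Ioi 0))
    (hc : ContinuousOn h' (Ioi 0)) (hp : StrainPath k κ h' (Iic 0) x w)
    (hx : 0 < cauchyStress k κ h' 1 (x 0))
    (hT : Tendsto (fun s ↦ cauchyStress k κ h' (w s) (x s)) atBot (nhds 0)) :
    ∀ s ∈ Iic (0 : ℝ), w s < 1 := by
  refine hp.lt_one_of_exists hκ hmono hc ordConnected_Iic ?_
  by_contra! hge
  have hanti : AntitoneOn (fun s ↦ cauchyStress k κ h' (w s) (x s)) (Iic 0) := by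
    refine antitoneOn_of_hasDerivWithinAt_nonpos (convex_Iic 0) hp.continuousOn_cauchyStress
      (fun s hs ↦ (hp.hasDeriv_cauchyStress (interior_subset hs)).mono interior_subset)
      fun s hs ↦ ?_
    have hs := interior_subset hs
    exact mul_nonpos_of_nonneg_of_nonpos (by positivity) (mul_nonpos_of_nonneg_of_nonpos
      (hp.pos s hs).le (sub_nonpos.2 (one_le_pow₀ (hge s hs))))
  have hle : cauchyStress k κ h' (w 0) (x 0) ≤ 0 := by
    refine ge_of_tendsto hT ?_
    filter_upwards [eventually_le_atBot 0] with s hs using hanti hs self_mem_Iic hs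
  refine (hx.trans_le ?_).not_ge hle
  exact (strictMonoOn_cauchyStress hκ hmono (x 0)).monotoneOn (mem_Ioi.2 one_pos)
    (hp.pos 0 self_mem_Iic) (hge 0 self_mem_Iic)

theorem exists_tendsto_x_atTop (hκ : 0 < κ) (hmono : MonotoneOn h' (Ioi 0))
    (hc : ContinuousOn h' (Ioi 0)) (hp : StrainPath k κ h' univ x w) (hlt : ∀ s, w s < 1)
    (hT : Tendsto (fun s ↦ cauchyStress k κ h' (w s) (x s)) atBot (nhds 0)) :
    ∃ xc, 0 < cauchyStress k κ h' 1 xc ∧ Tendsto x atTop (nhds xc) := by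
  have hanti : StrictAnti x :=
    strictAntiOn_univ.1 (hp.strictAntiOn_x convex_univ fun s _ ↦ hlt s)
  have hmonoT : StrictMono (fun s ↦ cauchyStress k κ h' (w s) (x s)) :=
    strictMonoOn_univ.1 (hp.strictMonoOn_cauchyStress hκ convex_univ fun s _ ↦ hlt s)
  have hT₀ := (hp.mono (subset_univ _)).cauchyStress_pos hκ (fun s _ ↦ hlt s) hT
  have hge : ∀ s ≥ 0, cauchyStress k κ h' (w 0) (x 0) ≤ cauchyStress k κ h' 1 (x s) := fun s hs ↦
    (hmonoT.monotone hs).trans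
      (strictMonoOn_cauchyStress hκ hmono (x s) (hp.pos s trivial) (mem_Ioi.2 one_pos)
        (hlt s)).le
  obtain ⟨y, hy⟩ := eventually_atBot.1 <|
    (tendsto_cauchyStress_atBot (k := k) hκ hmono one_pos).eventually_lt_atBot
      (cauchyStress k κ h' (w 0) (x 0))
  have hbdd : BddBelow (range x) := by
    refine ⟨y, ?_⟩
    rintro _ ⟨s, rfl⟩
    by_contra! hlt
    exact (hge _ (le_max_left 0 s)).not_gt
      (hy _ ((hanti.antitone (le_max_right 0 s)).trans hlt.le))
  have hlim := tendsto_atTop_ciInf hanti.antitone hbdd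
  refine ⟨⨅ s, x s, hT₀.trans_le (ge_of_tendsto
    (((continuous_cauchyStress hc one_pos).tendsto _).comp hlim) ?_), hlim⟩
  filter_upwards [eventually_ge_atTop 0] with s hs using hge s hs

theorem tendsto_w_atTop (hκ : 0 < κ) (hmono : MonotoneOn h' (Ioi 0))
    (hp : StrainPath k κ h' univ x w) (hlt : ∀ s, w s < 1) {xc : ℝ}
    (hx : Tendsto x atTop (nhds xc)) : Tendsto w atTop (nhds 1) := by
  have hmonow : StrictMono w :=
    strictMonoOn_univ.1 (hp.strictMonoOn_w hκ hmono convex_univ fun s _ ↦ hlt s)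
  refine tendsto_order.2 ⟨fun c hc ↦ ?_, fun c hc ↦ .of_forall fun s ↦ (hlt s).trans hc⟩
  obtain ⟨t, ht⟩ : ∃ t, c < w t := by
    by_contra! hle
    have hanti := hp.antitoneOn_x_sub_mul convex_univ fun s _ ↦ hle s
    refine not_tendsto_nhds_of_tendsto_atBot (tendsto_atBot_mono' _ ?_
      (tendsto_atBot_add_const_left _ (x 0)
        (tendsto_id.const_mul_atTop_of_neg (sub_neg.2 hc)))) xc hx
    filter_upwards [eventually_ge_atTop 0] with s hs
    have := hanti trivial trivial hs
    simp only [id]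
    linarith
  filter_upwards [eventually_ge_atTop t] with s hs using ht.trans_le (hmonow.monotone hs)

end StrainPath

section Cavity

/-- The variable `ζ = w + ⋯ + w^(k+1)`. Along a strain path the Cauchy stress `T` and
`X = (k + 1) κ x` satisfy `dT = -ζ dX`, so that the Legendre transform `T + ζ X` is defined. -/
def conjugateStrain (k : ℕ) (w : ℝ) : ℝ :=
  ∑ i ∈ Finset.range (k + 1), w ^ (i + 1)

variable {k : ℕ} {κ : ℝ} {h' : ℝ → ℝ} {x w x₁ x₂ w₁ w₂ : ℝ → ℝ}

theorem conjugateStrain_zero : conjugateStrain k 0 = 0 := by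
  simp [conjugateStrain]

theorem continuous_conjugateStrain : Continuous (conjugateStrain k) := by
  unfold conjugateStrain
  fun_prop

theorem strictMonoOn_conjugateStrain : StrictMonoOn (conjugateStrain k) (Ici 0) := by
  intro w₁ (hw₁ : 0 ≤ w₁) w₂ _ hlt
  exact Finset.sum_lt_sum_of_nonempty (by simp) fun i _ ↦ by gcongr

theorem conjugateStrain_mul_one_sub (w : ℝ) :
    conjugateStrain k w * (1 - w) = w * (1 - w ^ (k + 1)) := by
  rw [← geom_sum_mul_neg w (k + 1), ← mul_assoc, Finset.mul_sum, conjugateStrain]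
  simp only [pow_succ']

theorem StrainPath.exists_legendre (hκ : 0 < κ) (hmono : MonotoneOn h' (Ioi 0))
    (hp : StrainPath k κ h' (Iic 0) x w) (hlt : ∀ s ∈ Iic (0 : ℝ), w s < 1)
    (hT : Tendsto (fun s ↦ cauchyStress k κ h' (w s) (x s)) atBot (nhds 0)) :
    ∃ v y : ℝ → ℝ, y (conjugateStrain k (w 0)) = x 0 ∧
      Tendsto (fun ζ ↦ cauchyStress k κ h' (v ζ) (y ζ)) (nhdsWithin 0 (Ioi 0)) (nhds 0) ∧
      ∀ ζ ∈ Ioc 0 (conjugateStrain k (w 0)), 0 < v ζ ∧ conjugateStrain k (v ζ) = ζ ∧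
        HasDerivWithinAt (fun ζ ↦ cauchyStress k κ h' (v ζ) (y ζ) + ζ * ((k + 1) * κ * y ζ))
          ((k + 1) * κ * y ζ) (Ioc 0 (conjugateStrain k (w 0))) ζ := by
  set z := fun s ↦ conjugateStrain k (w s)
  have hz : StrictMonoOn z (Iic 0) := strictMonoOn_conjugateStrain.comp
    (hp.strictMonoOn_w hκ hmono (convex_Iic 0) hlt) fun s hs ↦ (hp.pos s hs).le
  have hzc : ContinuousOn z (Iic 0) :=
    continuous_conjugateStrain.comp_continuousOn hp.continuousOn_w
  have hz₀ : Tendsto z atBot (nhds 0) := by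
    have := ((continuous_conjugateStrain (k := k)).tendsto 0).comp
      (hp.tendsto_w_atBot hκ hmono hlt hT)
    rwa [conjugateStrain_zero] at this
  have himage : z '' Iic 0 = Ioc 0 (z 0) := image_Iic_eq_Ioc_of_strictMonoOn hz hzc hz₀
  set g := Function.invFunOn z (Iic 0)
  have hg : LeftInvOn g z (Iic 0) := hz.injOn.leftInvOn_invFunOn
  refine ⟨w ∘ g, x ∘ g, congrArg x (hg self_mem_Iic),
    hT.comp (tendsto_leftInvOn_nhdsGT_atBot hz hzc hz₀ hg), fun ζ hζ ↦ ?_⟩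
  rw [← himage] at hζ ⊢
  refine ⟨hp.pos _ (Function.invFunOn_mem hζ), Function.invFunOn_eq hζ,
    hasDerivWithinAt_add_mul_comp_leftInvOn (X := fun s ↦ (k + 1) * κ * x s)
      (X' := fun s ↦ (k + 1) * κ * (w s - 1)) (T := fun s ↦ cauchyStress k κ h' (w s) (x s))
      ordConnected_Iic hz hzc (fun s hs ↦ (hp.hasDeriv_x s hs).const_mul _) (fun s hs ↦ ?_)
      (fun s hs ↦ (hp.hasDeriv_cauchyStress hs).congr_deriv ?_) hg hζ⟩
  · exact mul_nonpos_of_nonneg_of_nonpos (by positivity) (sub_nonpos.2 (hlt s hs).le)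
  · rw [← conjugateStrain_mul_one_sub]
    ring

theorem abs_le_abs_add_of_mul_nonneg {a b : ℝ} (h : 0 ≤ a * b) : |a| ≤ |a + b| :=
  sq_le_sq.1 (by nlinarith [sq_nonneg b])

theorem sub_mul_reducedStress_sub_nonneg (hκ : 0 ≤ κ) (hmono : MonotoneOn h' (Ioi 0)) {w : ℝ}
    (hw : 0 < w) (x₁ x₂ : ℝ) :
    0 ≤ ((k + 1) * κ * x₁ - (k + 1) * κ * x₂) *
      (reducedStress k κ h' w x₁ - reducedStress k κ h' w x₂) := by
  rw [← mul_sub, mul_assoc]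
  refine mul_nonneg (by positivity) ?_
  rcases le_total x₁ x₂ with hle | hle
  · exact mul_nonneg_of_nonpos_of_nonpos (sub_nonpos.2 hle)
      (sub_nonpos.2 (monotone_reducedStress hmono hw hle))
  · exact mul_nonneg (sub_nonneg.2 hle) (sub_nonneg.2 (monotone_reducedStress hmono hw hle))

theorem abs_sub_le_abs_legendre_sub (hκ : 0 ≤ κ) (hmono : MonotoneOn h' (Ioi 0)) {w ζ : ℝ}
    (hw : 0 < w) (hζ : 0 ≤ ζ) (x₁ x₂ : ℝ) :
    |(k + 1) * κ * x₁ - (k + 1) * κ * x₂| ≤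
      |(cauchyStress k κ h' w x₁ + ζ * ((k + 1) * κ * x₁)) -
        (cauchyStress k κ h' w x₂ + ζ * ((k + 1) * κ * x₂))| := by
  have hP := sub_mul_reducedStress_sub_nonneg (k := k) hκ hmono hw x₁ x₂
  set d := (k + 1) * κ * x₁ - (k + 1) * κ * x₂ with hd
  calc |d| ≤ |d + (ζ * d + (reducedStress k κ h' w x₁ - reducedStress k κ h' w x₂))| :=
        abs_le_abs_add_of_mul_nonneg (by nlinarith [mul_nonneg hζ (mul_self_nonneg d)])
    _ = _ := by rw [hd]; unfold cauchyStress; ring_nf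

theorem abs_legendre_sub_le (hκ : 0 ≤ κ) (hmono : MonotoneOn h' (Ioi 0)) {w ζ : ℝ}
    (hw : 0 < w) (hζ : 0 ≤ ζ) (x₁ x₂ : ℝ) :
    |(cauchyStress k κ h' w x₁ + ζ * ((k + 1) * κ * x₁)) -
        (cauchyStress k κ h' w x₂ + ζ * ((k + 1) * κ * x₂))| ≤
      (1 + ζ) * |cauchyStress k κ h' w x₁ - cauchyStress k κ h' w x₂| := by
  have hle := abs_sub_le_abs_legendre_sub (k := k) hκ hmono hw le_rfl x₁ x₂
  simp only [zero_mul, add_zero] at hle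
  rw [add_sub_add_comm, ← mul_sub ζ, one_add_mul]
  refine (abs_add_le _ _).trans ?_
  rw [abs_mul, abs_of_nonneg hζ]
  exact add_le_add_right (mul_le_mul_of_nonneg_left hle hζ) _

theorem StrainPath.x_eq_of_w_eq (hκ : 0 < κ) (hmono : MonotoneOn h' (Ioi 0))
    (hp₁ : StrainPath k κ h' (Iic 0) x₁ w₁) (hlt₁ : ∀ s ∈ Iic (0 : ℝ), w₁ s < 1)
    (hT₁ : Tendsto (fun s ↦ cauchyStress k κ h' (w₁ s) (x₁ s)) atBot (nhds 0))
    (hp₂ : StrainPath k κ h' (Iic 0) x₂ w₂) (hlt₂ : ∀ s ∈ Iic (0 : ℝ), w₂ s < 1)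
    (hT₂ : Tendsto (fun s ↦ cauchyStress k κ h' (w₂ s) (x₂ s)) atBot (nhds 0))
    (hw : w₁ 0 = w₂ 0) : x₁ 0 = x₂ 0 := by
  obtain ⟨v₁, y₁, hy₁, hlim₁, hlegendre₁⟩ := hp₁.exists_legendre hκ hmono hlt₁ hT₁
  obtain ⟨v₂, y₂, hy₂, hlim₂, hlegendre₂⟩ := hp₂.exists_legendre hκ hmono hlt₂ hT₂
  rw [← hw] at hy₂ hlegendre₂
  have hw₀ := hp₁.pos 0 self_mem_Iic
  set ζ₀ := conjugateStrain k (w₁ 0)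
  have hζ₀ : 0 < ζ₀ :=
    conjugateStrain_zero (k := k) ▸ strictMonoOn_conjugateStrain self_mem_Ici hw₀.le hw₀
  have hveq : ∀ ζ ∈ Ioc 0 ζ₀, v₂ ζ = v₁ ζ := fun ζ hζ ↦
    strictMonoOn_conjugateStrain.injOn (hlegendre₂ ζ hζ).1.le (hlegendre₁ ζ hζ).1.le
      ((hlegendre₂ ζ hζ).2.1.trans (hlegendre₁ ζ hζ).2.1.symm)
  have hlim : Tendsto (fun ζ ↦
      (1 + ζ) * |cauchyStress k κ h' (v₁ ζ) (y₁ ζ) - cauchyStress k κ h' (v₂ ζ) (y₂ ζ)|)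
      (nhdsWithin 0 (Ioi 0)) (nhds 0) := by
    simpa using ((tendsto_id.const_add (1 : ℝ)).mono_left nhdsWithin_le_nhds).mul
      (hlim₁.sub hlim₂).abs
  have hzero := eqOn_zero_of_norm_deriv_le (M := 1)
    (fun ζ hζ ↦ (hlegendre₁ ζ hζ).2.2.sub (hlegendre₂ ζ hζ).2.2)
    (fun ζ hζ ↦ by
      rw [one_mul, Pi.sub_apply, hveq ζ hζ]
      exact abs_sub_le_abs_legendre_sub hκ.le hmono (hlegendre₁ ζ hζ).1 hζ.1.le _ _)
    (squeeze_zero_norm' (by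
      filter_upwards [Ioc_mem_nhdsGT hζ₀] with ζ hζ
      rw [Pi.sub_apply, hveq ζ hζ]
      exact abs_legendre_sub_le hκ.le hmono (hlegendre₁ ζ hζ).1 hζ.1.le _ _) hlim)
    (right_mem_Ioc.2 hζ₀)
  have hle := abs_sub_le_abs_legendre_sub (k := k) hκ.le hmono
    (hlegendre₁ ζ₀ (right_mem_Ioc.2 hζ₀)).1 hζ₀.le (y₁ ζ₀) (y₂ ζ₀)
  simp only [Pi.sub_apply, Pi.zero_apply, hveq ζ₀ (right_mem_Ioc.2 hζ₀)] at hzero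
  rw [hzero, abs_zero, abs_nonpos_iff, sub_eq_zero, hy₁, hy₂] at hle
  exact mul_left_cancel₀ (by positivity) hle

theorem StrainPath.eqOn_Iic (hκ : 0 < κ) (hmono : MonotoneOn h' (Ioi 0))
    (hc : ContinuousOn h' (Ioi 0)) (hp₁ : StrainPath k κ h' (Iic 0) x₁ w₁)
    (hlt₁ : ∀ s ∈ Iic (0 : ℝ), w₁ s < 1)
    (hT₁ : Tendsto (fun s ↦ cauchyStress k κ h' (w₁ s) (x₁ s)) atBot (nhds 0))
    (hp₂ : StrainPath k κ h' (Iic 0) x₂ w₂) (hlt₂ : ∀ s ∈ Iic (0 : ℝ), w₂ s < 1)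
    (hT₂ : Tendsto (fun s ↦ cauchyStress k κ h' (w₂ s) (x₂ s)) atBot (nhds 0))
    (hw : w₁ 0 = w₂ 0) : EqOn x₁ x₂ (Iic 0) :=
  (hp₁.eqOn hκ hmono hc ordConnected_Iic hp₂ self_mem_Iic
    (x_eq_of_w_eq hκ hmono hp₁ hlt₁ hT₁ hp₂ hlt₂ hT₂ hw) hw).1

end Cavity

namespace StrainPath

variable {k : ℕ} {κ : ℝ} {h' : ℝ → ℝ} {x w x₁ x₂ w₁ w₂ : ℝ → ℝ}

theorem glue (hp₁ : StrainPath k κ h' (Iic 0) x₁ w₁) (hp₂ : StrainPath k κ h' (Ici 0) x₂ w₂)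
    (hx : x₁ 0 = x₂ 0) (hw : w₁ 0 = w₂ 0) :
    StrainPath k κ h' univ (fun s ↦ if s ≤ 0 then x₁ s else x₂ s)
      (fun s ↦ if s ≤ 0 then w₁ s else w₂ s) where
  pos s _ := by
    split_ifs with hs
    exacts [hp₁.pos s hs, hp₂.pos s (not_le.1 hs).le]
  continuousOn_w := by
    rw [← Iic_union_Ici (a := (0 : ℝ))]
    refine (hp₁.continuousOn_w.congr fun s hs ↦ if_pos hs).union_of_isClosed
      (hp₂.continuousOn_w.congr fun s (hs : 0 ≤ s) ↦ ?_) isClosed_Iic isClosed_Ici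
    rcases hs.eq_or_lt with rfl | hs
    exacts [(if_pos (le_refl (0 : ℝ))).trans hw, if_neg hs.not_ge]
  hasDeriv_x s _ := by
    refine (hasDerivAt_ite_le hp₁.hasDeriv_x hp₂.hasDeriv_x hx (by rw [hw]) s).hasDerivWithinAt
      |>.congr_deriv ?_
    split_ifs <;> rfl
  hasDeriv_reducedStress s _ := by
    refine (hasDerivAt_ite_le hp₁.hasDeriv_reducedStress hp₂.hasDeriv_reducedStress
      (by rw [hx, hw]) (by rw [hw]) s).hasDerivWithinAt.congr_deriv ?_ |>.congr
        (fun t _ ↦ ?_) ?_ <;>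
    split_ifs <;> rfl

theorem exists_Ici (hκ : 0 < κ) (hmono : MonotoneOn h' (Ioi 0)) (hc : ContinuousOn h' (Ioi 0))
    {w₀ : ℝ} (hw₀ : 0 < w₀) (hw₁ : w₀ < 1) (x₀ : ℝ) :
    ∃ x w : ℝ → ℝ, StrainPath k κ h' (Ici 0) x w ∧ x 0 = x₀ ∧ w 0 = w₀ := by
  obtain ⟨W, ⟨K, hWK⟩, hW⟩ := exists_lipschitzWith_isClampedRoot_reducedStress (k := k) hκ hmono
    hc hw₀ hw₁.le
  have hmem (y : ℝ × ℝ) : W y ∈ Icc w₀ 1 := (hW y.1 y.2).mem_Icc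
  have hpos (y : ℝ × ℝ) : 0 < W y := hw₀.trans_le (hmem y).1
  obtain ⟨C, L, hC, hL⟩ := exists_lipschitzWith_strainField_comp (k := k) (κ := κ) hWK hmem
  obtain ⟨y, hy₀, hy⟩ :=
    exists_forall_hasDerivAt_of_bounded_lipschitz hL hC (reducedStress k κ h' w₀ x₀, x₀)
  have hW₀ : W (y 0) = w₀ := by
    rw [hy₀]
    exact (hW _ x₀).eq_of_reducedStress hκ hmono hw₀ (left_mem_Icc.2 hw₁.le)
  have hlt : ∀ t, W (y t) < 1 := fun t ↦ (hmem (y t)).2.lt_of_ne fun h₁ ↦ by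
    have heq := eq_of_hasDerivAt_of_lipschitz_of_eq_zero hC hy (t := t)
      (Prod.ext (by simp [strainField, h₁]) (by simp [strainField, h₁])) 0
    exact hw₁.ne (by rw [← hW₀, heq, h₁])
  have hP (t : ℝ) : HasDerivAt (fun t ↦ (y t).1) (strainField k κ (W (y t))).1 t := (hy t).fst
  have hx (t : ℝ) : HasDerivAt (fun t ↦ (y t).2) (strainField k κ (W (y t))).2 t := (hy t).snd
  have hmonoP : Monotone fun t ↦ (y t).1 := monotone_of_hasDerivAt_nonneg hP
    fun t ↦ mul_nonneg (by positivity)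
      (sub_nonneg.2 (pow_le_one₀ (hpos (y t)).le (hlt t).le))
  have hantix : Antitone fun t ↦ (y t).2 := antitone_of_hasDerivAt_nonpos hx
    fun t ↦ sub_nonpos.2 (hlt t).le
  have hroot : ∀ t ∈ Ici (0 : ℝ), reducedStress k κ h' (W (y t)) (y t).2 = (y t).1 := by
    intro t ht
    refine le_antisymm ?_ ((hW (y t).1 (y t).2).le_map (hlt t))
    rcases (hmem (y t)).1.eq_or_lt with heq | hgt
    · calc reducedStress k κ h' (W (y t)) (y t).2 ≤ reducedStress k κ h' w₀ (y 0).2 := by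
            rw [← heq]; exact monotone_reducedStress hmono hw₀ (hantix ht)
        _ = (y 0).1 := by rw [hy₀]
        _ ≤ (y t).1 := hmonoP ht
    · exact (hW (y t).1 (y t).2).map_le hgt
  have hwc : Continuous fun t ↦ W (y t) :=
    hWK.continuous.comp (continuous_iff_continuousAt.2 fun t ↦ (hy t).continuousAt)
  exact ⟨fun t ↦ (y t).2, fun t ↦ W (y t),
    ⟨fun t _ ↦ hpos (y t), hwc.continuousOn, fun t _ ↦ (hx t).hasDerivWithinAt,
      fun t ht ↦ (hP t).hasDerivWithinAt.congr hroot (hroot t ht)⟩, congrArg Prod.snd hy₀, hW₀⟩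

theorem exists_univ_eqOn_Iic (hκ : 0 < κ) (hmono : MonotoneOn h' (Ioi 0))
    (hc : ContinuousOn h' (Ioi 0)) (hp : StrainPath k κ h' (Iic 0) x w) (hlt : w 0 < 1) :
    ∃ x' w' : ℝ → ℝ, StrainPath k κ h' univ x' w' ∧ EqOn x' x (Iic 0) ∧ EqOn w' w (Iic 0) := by
  obtain ⟨x₂, w₂, hp₂, hx₂, hw₂⟩ :=
    exists_Ici (k := k) hκ hmono hc (hp.pos 0 self_mem_Iic) hlt (x 0)
  exact ⟨_, _, hp.glue hp₂ hx₂.symm hw₂.symm, fun s hs ↦ if_pos hs, fun s hs ↦ if_pos hs⟩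

theorem exists_forall_eq_comp_add_const (hκ : 0 < κ) (hmono : MonotoneOn h' (Ioi 0))
    (hc : ContinuousOn h' (Ioi 0)) (hp₁ : StrainPath k κ h' univ x₁ w₁) (hlt₁ : ∀ s, w₁ s < 1)
    (hT₁ : Tendsto (fun s ↦ cauchyStress k κ h' (w₁ s) (x₁ s)) atBot (nhds 0))
    (hp₂ : StrainPath k κ h' (Iic 0) x₂ w₂) (hlt₂ : ∀ s ∈ Iic (0 : ℝ), w₂ s < 1)
    (hT₂ : Tendsto (fun s ↦ cauchyStress k κ h' (w₂ s) (x₂ s)) atBot (nhds 0)) :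
    ∃ a, ∀ s ≤ 0, x₂ s = x₁ (s + a) := by
  obtain ⟨xc, -, hxc⟩ := hp₁.exists_tendsto_x_atTop hκ hmono hc hlt₁ hT₁
  have hbot := (hp₁.mono (subset_univ _)).tendsto_w_atBot hκ hmono (fun s _ ↦ hlt₁ s) hT₁
  have htop := hp₁.tendsto_w_atTop hκ hmono hlt₁ hxc
  obtain ⟨a, ha⟩ : ∃ a, w₁ a = w₂ 0 := mem_range_of_exists_le_of_exists_ge
    (continuousOn_univ.1 hp₁.continuousOn_w)
    (hbot.eventually_le_const (hp₂.pos 0 self_mem_Iic)).exists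
    (htop.eventually_const_le (hlt₂ 0 self_mem_Iic)).exists
  refine ⟨a, fun s hs ↦ hp₂.eqOn_Iic hκ hmono hc hlt₂ hT₂
    ((hp₁.comp_add_const a).mono (subset_univ _)) (fun s _ ↦ hlt₁ _)
    (hT₁.comp (tendsto_atBot_add_const_right _ a tendsto_id)) ?_ hs⟩
  rw [zero_add, ha]

end StrainPath

section LogCoordinates

/-- The logarithm `x = ln (r / R)` of the circumferential stretch of `r`, as a function of
`s = ln R`. -/
def logStretch (r : ℝ → ℝ) (s : ℝ) : ℝ :=
  log (r (exp s) / exp s)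

/-- The ratio `w = r' / (r / R)` of the two principal stretches of `r`, as a function of
`s = ln R`. -/
def stretchRatio (r r' : ℝ → ℝ) (s : ℝ) : ℝ :=
  r' (exp s) / (r (exp s) / exp s)

/-- The radial deformation `r (R) = R e^(x (ln R))` of logarithmic stretch `x`. -/
def deformation (x : ℝ → ℝ) (R : ℝ) : ℝ :=
  R * exp (x (log R))

/-- The derivative `r' (R) = w e^(x (ln R))` of `deformation x` when `w` is its stretch ratio. -/
def deformationDeriv (x w : ℝ → ℝ) (R : ℝ) : ℝ :=
  exp (x (log R)) * w (log R)

theorem deformation_div (x : ℝ → ℝ) {R : ℝ} (hR : R ≠ 0) :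
    deformation x R / R = exp (x (log R)) :=
  mul_div_cancel_left₀ _ hR

theorem deformation_logStretch {r : ℝ → ℝ} {R : ℝ} (hR : 0 < R) (hr : 0 < r R) :
    deformation (logStretch r) R = r R := by
  rw [deformation, logStretch, exp_log hR, exp_log (div_pos hr hR), mul_div_cancel₀ _ hR.ne']

theorem deformation_comp_add_const (x : ℝ → ℝ) (a : ℝ) {R : ℝ} (hR : R ≠ 0) :
    deformation (fun s ↦ x (s + a)) R = deformation x (exp a * R) / exp a := by
  rw [deformation, deformation, log_mul (exp_pos a).ne' hR, log_exp, add_comm a, mul_assoc,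
    mul_div_cancel_left₀ _ (exp_pos a).ne']

variable {k n : ℕ} {κ : ℝ} {h' : ℝ → ℝ}

theorem exp_add_two_mul_log (k : ℕ) {v : ℝ} (hv : 0 < v) :
    exp ((k + 2) * log v) = v ^ (k + 2) := by
  rw [mul_comm, ← rpow_def_of_pos hv]
  exact_mod_cast rpow_natCast v (k + 2)

theorem div_mul_exp_add_two_mul_log (k : ℕ) (q : ℝ) {v : ℝ} (hv : 0 < v) :
    q / v * exp ((k + 2) * log v) = q * v ^ (k + 1) := by
  rw [exp_add_two_mul_log k hv]
  field_simp
  ring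

theorem THat_eq_cauchyStress (q : ℝ) {v : ℝ} (hv : 0 < v) :
    THat (k + 2) κ h' q v = cauchyStress k κ h' (q / v) (log v) := by
  rw [THat, cauchyStress, reducedStress, div_mul_exp_add_two_mul_log k q hv]
  push_cast
  ring

theorem PhiHat1_eq_mul_cauchyStress (q : ℝ) {v : ℝ} (hv : 0 < v) :
    PhiHat1 (k + 2) κ h' q v = v ^ (k + 1) * cauchyStress k κ h' (q / v) (log v) := by
  rw [PhiHat1, cauchyStress, reducedStress, div_mul_exp_add_two_mul_log k q hv, div_pow]
  push_cast
  field_simp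
  ring

theorem PhiHat2_eq_mul_cauchyStress_add (q : ℝ) {v : ℝ} (hv : 0 < v) :
    PhiHat2 (k + 2) κ h' q v =
      q * v ^ k * (cauchyStress k κ h' (q / v) (log v) + κ * (1 - (q / v) ^ (k + 1))) := by
  rw [PhiHat2, cauchyStress, reducedStress, div_mul_exp_add_two_mul_log k q hv]
  push_cast
  ring

theorem lt_of_PhiHat1_nonpos_of_pos (hn : 2 ≤ n) (hκ : 0 < κ) (hmono : MonotoneOn h' (Ioi 0))
    {μ v : ℝ} (hμ : 0 < μ) (hv : 0 < v) (hμ₀ : PhiHat1 n κ h' μ μ ≤ 0)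
    (hv₀ : 0 < PhiHat1 n κ h' v v) : μ < v := by
  obtain ⟨k, rfl⟩ : ∃ k, n = k + 2 := ⟨n - 2, by omega⟩
  rw [PhiHat1_eq_mul_cauchyStress _ hμ, div_self hμ.ne'] at hμ₀
  rw [PhiHat1_eq_mul_cauchyStress _ hv, div_self hv.ne'] at hv₀
  refine (log_lt_log_iff hμ hv).1 ?_
  refine (strictMono_cauchyStress (k := k) hκ hmono one_pos).lt_iff_lt.1 ?_
  exact (nonpos_of_mul_nonpos_right hμ₀ (by positivity)).trans_lt
    (pos_of_mul_pos_right hv₀ (by positivity))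

theorem mapsTo_exp_Iic_Ioc : MapsTo exp (Iic 0) (Ioc 0 1) := fun s hs ↦
  ⟨exp_pos s, exp_le_one_iff.2 hs⟩

theorem hasDerivWithinAt_comp_exp {f : ℝ → ℝ} {f' s : ℝ}
    (hf : HasDerivWithinAt f f' (Ioc 0 1) (exp s)) :
    HasDerivWithinAt (fun s ↦ f (exp s)) (f' * exp s) (Iic 0) s :=
  hf.comp s (hasDerivAt_exp s).hasDerivWithinAt mapsTo_exp_Iic_Ioc

namespace ModRadialSol

variable {r r' r'' : ℝ → ℝ} {s : ℝ}

theorem div_exp_pos (hr : ModRadialSol n κ h' r r' r'') (hs : s ∈ Iic (0 : ℝ)) :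
    0 < r (exp s) / exp s :=
  div_pos (hr.pos _ (mapsTo_exp_Iic_Ioc hs)) (exp_pos s)

theorem stretchRatio_pos (hr : ModRadialSol n κ h' r r' r'') (hs : s ∈ Iic (0 : ℝ)) :
    0 < stretchRatio r r' s :=
  div_pos (hr.derivPos _ (mapsTo_exp_Iic_Ioc hs)) (hr.div_exp_pos hs)

theorem continuousOn_stretchRatio (hr : ModRadialSol n κ h' r r' r'') :
    ContinuousOn (stretchRatio r r') (Iic 0) := by
  have hrc : ContinuousOn (fun s ↦ r (exp s)) (Iic 0) := fun s hs ↦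
    (hasDerivWithinAt_comp_exp (hr.hasDeriv _ (mapsTo_exp_Iic_Ioc hs))).continuousWithinAt
  have hrc' : ContinuousOn (fun s ↦ r' (exp s)) (Iic 0) := fun s hs ↦
    (hasDerivWithinAt_comp_exp (hr.hasDeriv2 _ (mapsTo_exp_Iic_Ioc hs))).continuousWithinAt
  exact hrc'.div (hrc.div continuous_exp.continuousOn fun s _ ↦ (exp_pos s).ne')
    fun s hs ↦ (hr.div_exp_pos hs).ne'

theorem hasDerivWithinAt_logStretch (hr : ModRadialSol n κ h' r r' r'') (hs : s ∈ Iic (0 : ℝ)) :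
    HasDerivWithinAt (logStretch r) (stretchRatio r r' s - 1) (Iic 0) s := by
  have hr₀ := hr.pos _ (mapsTo_exp_Iic_Ioc hs)
  have hd := hasDerivWithinAt_comp_exp (hr.hasDeriv _ (mapsTo_exp_Iic_Ioc hs))
  refine ((hd.div (hasDerivAt_exp s).hasDerivWithinAt (exp_pos s).ne').log
    (hr.div_exp_pos hs).ne').congr_deriv ?_
  simp only [stretchRatio, Pi.div_apply]
  field_simp

theorem exp_pow_mul_PhiHat1 (hr : ModRadialSol (k + 2) κ h' r r' r'') (hs : s ∈ Iic (0 : ℝ)) :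
    exp s ^ (k + 1) * PhiHat1 (k + 2) κ h' (r' (exp s)) (r (exp s) / exp s) =
      r (exp s) ^ (k + 1) * cauchyStress k κ h' (stretchRatio r r' s) (logStretch r s) := by
  rw [PhiHat1_eq_mul_cauchyStress _ (hr.div_exp_pos hs), ← mul_assoc, ← mul_pow,
    mul_div_cancel₀ _ (exp_pos s).ne', stretchRatio, logStretch]

theorem hasDerivWithinAt_cauchyStress (hr : ModRadialSol (k + 2) κ h' r r' r'')
    (hs : s ∈ Iic (0 : ℝ)) :
    HasDerivWithinAt (fun s ↦ cauchyStress k κ h' (stretchRatio r r' s) (logStretch r s))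
      ((k + 1) * κ * (stretchRatio r r' s * (1 - stretchRatio r r' s ^ (k + 1)))) (Iic 0) s := by
  have hr₀ {t : ℝ} (ht : t ∈ Iic (0 : ℝ)) := hr.pos _ (mapsTo_exp_Iic_Ioc ht)
  have hF := hasDerivWithinAt_comp_exp (hr.equil _ (mapsTo_exp_Iic_Ioc hs))
  have hd := hasDerivWithinAt_comp_exp (hr.hasDeriv _ (mapsTo_exp_Iic_Ioc hs))
  have hquot {t : ℝ} (ht : t ∈ Iic (0 : ℝ)) :
      cauchyStress k κ h' (stretchRatio r r' t) (logStretch r t) =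
        exp t ^ (k + 1) * PhiHat1 (k + 2) κ h' (r' (exp t)) (r (exp t) / exp t) /
          r (exp t) ^ (k + 1) := by
    rw [hr.exp_pow_mul_PhiHat1 ht, mul_div_cancel_left₀ _ (pow_pos (hr₀ ht) _).ne']
  refine ((hF.div (hd.pow (k + 1)) (pow_pos (hr₀ hs) _).ne').congr (fun t ht ↦ hquot ht)
    (hquot hs)).congr_deriv ?_
  have hr₀ := hr₀ hs
  simp only [show k + 2 - 1 = k + 1 from rfl, show k + 2 - 2 = k from rfl,
    show k + 1 - 1 = k from rfl, Pi.pow_apply]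
  rw [hr.exp_pow_mul_PhiHat1 hs, PhiHat2_eq_mul_cauchyStress_add _ (hr.div_exp_pos hs),
    ← logStretch, ← stretchRatio]
  generalize cauchyStress k κ h' (stretchRatio r r' s) (logStretch r s) = T
  push_cast
  simp only [stretchRatio, div_pow]
  field_simp
  ring

theorem strainPath (hr : ModRadialSol (k + 2) κ h' r r' r'') :
    StrainPath k κ h' (Iic 0) (logStretch r) (stretchRatio r r') where
  pos _ hs := hr.stretchRatio_pos hs
  continuousOn_w := hr.continuousOn_stretchRatio
  hasDeriv_x _ hs := hr.hasDerivWithinAt_logStretch hs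
  hasDeriv_reducedStress s hs := by
    have hx := (hr.hasDerivWithinAt_logStretch hs).const_add (1 / ((k : ℝ) + 2))
    refine ((hr.hasDerivWithinAt_cauchyStress hs).sub (hx.const_mul ((k + 1) * κ))).congr_deriv ?_
      |>.congr (fun t _ ↦ ?_) ?_
    · simp only [strainField]
      ring
    all_goals exact (add_sub_cancel_right _ _).symm

theorem tendsto_cauchyStress (hr : ModRadialSol (k + 2) κ h' r r' r'')
    (hT : Tendsto (fun R ↦ THat (k + 2) κ h' (r' R) (r R / R)) (nhdsWithin 0 (Ioi 0)) (nhds 0)) :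
    Tendsto (fun s ↦ cauchyStress k κ h' (stretchRatio r r' s) (logStretch r s)) atBot
      (nhds 0) := by
  refine (hT.comp tendsto_exp_atBot_nhdsGT).congr' ?_
  filter_upwards [eventually_le_atBot 0] with s hs
  exact THat_eq_cauchyStress _ (hr.div_exp_pos hs)

theorem exists_strainPath_univ (hκ : 0 < κ) (hmono : MonotoneOn h' (Ioi 0))
    (hc : ContinuousOn h' (Ioi 0)) (hr : ModRadialSol (k + 2) κ h' r r' r'')
    (hlt : ∃ R ∈ Ioc (0 : ℝ) 1, r' R < r R / R)
    (hT : Tendsto (fun R ↦ THat (k + 2) κ h' (r' R) (r R / R)) (nhdsWithin 0 (Ioi 0)) (nhds 0)) :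
    ∃ x w : ℝ → ℝ, StrainPath k κ h' univ x w ∧ (∀ s, w s < 1) ∧ EqOn x (logStretch r) (Iic 0) ∧
      Tendsto (fun s ↦ cauchyStress k κ h' (w s) (x s)) atBot (nhds 0) := by
  obtain ⟨R, hR, hlt⟩ := hlt
  have hw : stretchRatio r r' (log R) < 1 := by
    rw [stretchRatio, exp_log hR.1]
    exact (div_lt_one (div_pos (hr.pos R hR) hR.1)).2 hlt
  have hlt₀ : ∀ s ∈ Iic 0, stretchRatio r r' s < 1 := hr.strainPath.lt_one_of_exists hκ hmono hc
    ordConnected_Iic ⟨log R, log_nonpos hR.1.le hR.2, hw⟩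
  obtain ⟨x, w, hp, hx, hw⟩ :=
    hr.strainPath.exists_univ_eqOn_Iic hκ hmono hc (hlt₀ 0 self_mem_Iic)
  have hlt : ∀ s, w s < 1 := fun s ↦ hp.lt_one_of_exists hκ hmono hc ordConnected_univ
    ⟨0, trivial, (hw self_mem_Iic).trans_lt (hlt₀ 0 self_mem_Iic)⟩ s trivial
  refine ⟨x, w, hp, hlt, hx, (hr.tendsto_cauchyStress hT).congr' ?_⟩
  filter_upwards [eventually_le_atBot 0] with s hs
  rw [hx hs, hw hs]

theorem exists_eq_deformation_mul_div (hκ : 0 < κ) (hmono : MonotoneOn h' (Ioi 0))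
    (hc : ContinuousOn h' (Ioi 0)) (hr : ModRadialSol (k + 2) κ h' r r' r'')
    (hT : Tendsto (fun R ↦ THat (k + 2) κ h' (r' R) (r R / R)) (nhdsWithin 0 (Ioi 0)) (nhds 0))
    {x w : ℝ → ℝ} (hp : StrainPath k κ h' univ x w) (hlt : ∀ s, w s < 1)
    (hTp : Tendsto (fun s ↦ cauchyStress k κ h' (w s) (x s)) atBot (nhds 0))
    (hpos : 0 < cauchyStress k κ h' 1 (log (r 1))) :
    ∃ α, 0 < α ∧ ∀ R ∈ Ioc (0 : ℝ) 1, r R = deformation x (α * R) / α := by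
  have hx₀ : logStretch r 0 = log (r 1) := by rw [logStretch, exp_zero, div_one]
  have hT := hr.tendsto_cauchyStress hT
  have hlt₀ := hr.strainPath.lt_one_of_cauchyStress_pos hκ hmono hc (hx₀ ▸ hpos) hT
  obtain ⟨a, ha⟩ :=
    hp.exists_forall_eq_comp_add_const hκ hmono hc hlt hTp hr.strainPath hlt₀ hT
  refine ⟨exp a, exp_pos a, fun R hR ↦ ?_⟩
  rw [← deformation_logStretch hR.1 (hr.pos R hR), ← deformation_comp_add_const x a hR.1.ne',
    deformation, deformation, ha _ (log_nonpos hR.1.le hR.2)]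

theorem exists_deriv_lt_of_cavity (hr : ModRadialSol n κ h' r r' r'')
    (hcont : ContinuousOn r (Icc 0 1)) (hcav : 0 < r 0) :
    ∃ R ∈ Ioc (0 : ℝ) 1, r' R < r R / R := by
  by_contra! hge
  have hquot : MonotoneOn (logStretch r) (Iic 0) :=
    monotoneOn_of_hasDerivWithinAt_nonneg (convex_Iic 0)
      (fun s hs ↦ (hr.hasDerivWithinAt_logStretch hs).continuousWithinAt)
      (fun s hs ↦ (hr.hasDerivWithinAt_logStretch (interior_subset hs)).mono interior_subset)
      fun s hs ↦ by
        have hs := interior_subset hs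
        exact sub_nonneg.2 ((one_le_div (hr.div_exp_pos hs)).2 (hge _ (mapsTo_exp_Iic_Ioc hs)))
  have hle : ∀ R ∈ Ioc (0 : ℝ) 1, r R ≤ r 1 * R := fun R hR ↦ by
    have := hquot (log_nonpos hR.1.le hR.2) self_mem_Iic (log_nonpos hR.1.le hR.2)
    rw [logStretch, logStretch, exp_log hR.1, exp_zero, div_one,
      log_le_log_iff (div_pos (hr.pos R hR) hR.1) (hr.pos 1 ⟨one_pos, le_rfl⟩)] at this
    exact (div_le_iff₀ hR.1).1 this
  have h₀ : r 0 ≤ r 1 * 0 := by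
    have hr₀ : ContinuousWithinAt r (Ioc 0 1) 0 :=
      (hcont 0 (left_mem_Icc.2 zero_le_one)).mono Ioc_subset_Icc_self
    refine hr₀.closure_le ?_ (by fun_prop) hle
    rw [closure_Ioc zero_ne_one]
    exact left_mem_Icc.2 zero_le_one
  exact hcav.not_ge (h₀.trans_eq (mul_zero _))

end ModRadialSol

namespace StrainPath

variable {x w : ℝ → ℝ} {R : ℝ}

theorem hasDerivAt_deformation (hp : StrainPath k κ h' univ x w) (hR : 0 < R) :
    HasDerivAt (deformation x) (deformationDeriv x w R) R := by
  have hx := ((hp.hasDeriv_x (log R) trivial).hasDerivAt univ_mem).comp R (hasDerivAt_log hR.ne')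
  refine ((hasDerivAt_id R).mul hx.exp).congr_deriv ?_
  simp only [deformationDeriv, strainField, id, Function.comp_apply]
  field_simp
  ring

theorem hasDerivAt_pow_mul_PhiHat1 (hp : StrainPath k κ h' univ x w) (hR : 0 < R) :
    HasDerivAt
      (fun s ↦ s ^ (k + 1) * PhiHat1 (k + 2) κ h' (deformationDeriv x w s) (deformation x s / s))
      ((k + 1) * R ^ k * PhiHat2 (k + 2) κ h' (deformationDeriv x w R) (deformation x R / R))
      R := by
  have hratio (s : ℝ) : deformationDeriv x w s / exp (x (log s)) = w (log s) :=
    mul_div_cancel_left₀ _ (exp_pos _).ne'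
  have hT := ((hp.hasDeriv_cauchyStress (s := log R) trivial).hasDerivAt univ_mem).comp R
    (hasDerivAt_log hR.ne')
  refine (((hp.hasDerivAt_deformation hR).pow (k + 1)).mul hT).congr_of_eventuallyEq ?_
    |>.congr_deriv ?_
  · filter_upwards [Ioi_mem_nhds hR] with s (hs : 0 < s)
    rw [deformation_div x hs.ne', PhiHat1_eq_mul_cauchyStress _ (exp_pos _), log_exp, hratio,
      ← mul_assoc, ← mul_pow]
    rfl
  · rw [deformation_div x hR.ne', PhiHat2_eq_mul_cauchyStress_add _ (exp_pos _), log_exp, hratio]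
    simp only [deformation, deformationDeriv, Function.comp_apply, Pi.pow_apply,
      show k + 1 - 1 = k from rfl]
    push_cast
    field_simp
    ring

theorem injOn_deformation_div (hp : StrainPath k κ h' univ x w) (hlt : ∀ s, w s < 1) :
    InjOn (fun R ↦ deformation x R / R) (Ioi 0) := by
  intro R₁ (h₁ : 0 < R₁) R₂ (h₂ : 0 < R₂) heq
  simp only [deformation_div x h₁.ne', deformation_div x h₂.ne'] at heq
  exact log_injOn_pos h₁ h₂ <|
    (hp.strictAntiOn_x convex_univ fun s _ ↦ hlt s).injOn trivial trivial (exp_injective heq)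

end StrainPath

theorem deformationDeriv_lt {x w : ℝ → ℝ} {R : ℝ} (hlt : ∀ s, w s < 1) (hR : R ≠ 0) :
    deformationDeriv x w R < deformation x R / R := by
  rw [deformation_div x hR]
  exact mul_lt_of_lt_one_right (exp_pos _) (hlt _)

theorem tendsto_exp_comp_log_atTop {x : ℝ → ℝ} {xc : ℝ} (hx : Tendsto x atTop (nhds xc)) :
    Tendsto (fun R ↦ exp (x (log R))) atTop (nhds (exp xc)) :=
  (continuous_exp.tendsto xc).comp (hx.comp tendsto_log_atTop)

theorem tendsto_deformation_div_atTop {x : ℝ → ℝ} {xc : ℝ} (hx : Tendsto x atTop (nhds xc)) :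
    Tendsto (fun R ↦ deformation x R / R) atTop (nhds (exp xc)) := by
  refine (tendsto_exp_comp_log_atTop hx).congr' ?_
  filter_upwards [eventually_ne_atTop 0] with R hR
  exact (deformation_div x hR).symm

theorem tendsto_deformationDeriv_atTop {x w : ℝ → ℝ} {xc : ℝ} (hx : Tendsto x atTop (nhds xc))
    (hw : Tendsto w atTop (nhds 1)) : Tendsto (deformationDeriv x w) atTop (nhds (exp xc)) := by
  rw [← mul_one (exp xc)]
  exact (tendsto_exp_comp_log_atTop hx).mul (hw.comp tendsto_log_atTop)

end LogCoordinates

theorem GoodH.continuousOn_deriv {h h' h'' : ℝ → ℝ} (hh : GoodH h h' h'') :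
    ContinuousOn h' (Ioi 0) := fun d hd ↦ (hh.deriv2 d hd).continuousAt.continuousWithinAt

theorem GoodH.monotoneOn_deriv {h h' h'' : ℝ → ℝ} (hh : GoodH h h' h'') :
    MonotoneOn h' (Ioi 0) :=
  monotoneOn_of_hasDerivWithinAt_nonneg (convex_Ioi 0) hh.continuousOn_deriv
    (fun d hd ↦ (hh.deriv2 d (interior_subset hd)).hasDerivWithinAt)
    fun d hd ↦ (hh.hpp_pos d (interior_subset hd)).le

theorem stmt19_general (n : ℕ) (hn : 2 ≤ n) (κ : ℝ) (hκ : 0 < κ) (h' : ℝ → ℝ)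
    (hc : ContinuousOn h' (Ioi 0)) (hmono : MonotoneOn h' (Ioi 0))
    (rc rc' rc'' : ℝ → ℝ) (hrc : ModRadialSol n κ h' rc rc' rc'')
    (hlt : ∃ R ∈ Ioc (0 : ℝ) 1, rc' R < rc R / R)
    (hT0 : Tendsto (fun R => THat n κ h' (rc' R) (rc R / R)) (nhdsWithin 0 (Ioi 0)) (nhds 0)) :
    ∃ re re' : ℝ → ℝ,
      (∀ R ∈ Ioc (0 : ℝ) 1, re R = rc R) ∧
      (∀ R ∈ Ioi (0 : ℝ), 0 < re R ∧ 0 < re' R ∧ HasDerivAt re (re' R) R) ∧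
      (∀ R ∈ Ioi (0 : ℝ),
        HasDerivAt (fun s => s ^ (n - 1) * PhiHat1 n κ h' (re' s) (re s / s))
          (((n : ℝ) - 1) * R ^ (n - 2) * PhiHat2 n κ h' (re' R) (re R / R)) R) ∧
      (∀ R ∈ Ioi (0 : ℝ), re' R < re R / R) ∧
      ∃ lamc : ℝ, (0 < lamc ∧ 0 < PhiHat1 n κ h' lamc lamc) ∧
        Tendsto re' atTop (nhds lamc) ∧
        Tendsto (fun R => re R / R) atTop (nhds lamc) ∧
        ∀ lam : ℝ, lamc < lam →
          ∀ rl rl' rl'' : ℝ → ℝ, ModRadialSol n κ h' rl rl' rl'' →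
            Tendsto (fun R => THat n κ h' (rl' R) (rl R / R))
              (nhdsWithin 0 (Ioi 0)) (nhds 0) →
            rl 1 = lam →
            ∃ α : ℝ, 0 < α ∧ re α / α = lam ∧
              (∀ β : ℝ, 0 < β → re β / β = lam → β = α) ∧
              ∀ R ∈ Ioc (0 : ℝ) 1, rl R = re (α * R) / α := by
  obtain ⟨k, rfl⟩ : ∃ k, n = k + 2 := ⟨n - 2, by omega⟩
  obtain ⟨x, w, hp, hlt, hx, hT⟩ := hrc.exists_strainPath_univ hκ hmono hc hlt hT0
  obtain ⟨xc, hxc, hlim⟩ := hp.exists_tendsto_x_atTop hκ hmono hc hlt hT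
  refine ⟨deformation x, deformationDeriv x w, fun R hR ↦ ?_,
    fun R hR ↦ ⟨mul_pos hR (exp_pos _), mul_pos (exp_pos _) (hp.pos _ trivial),
      hp.hasDerivAt_deformation hR⟩,
    fun R hR ↦ (hp.hasDerivAt_pow_mul_PhiHat1 hR).congr_deriv (by push_cast; ring),
    fun R hR ↦ deformationDeriv_lt hlt (ne_of_gt hR), exp xc, ⟨exp_pos xc, ?_⟩,
    tendsto_deformationDeriv_atTop hlim (hp.tendsto_w_atTop hκ hmono hlt hlim),
    tendsto_deformation_div_atTop hlim, ?_⟩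
  · rw [← deformation_logStretch hR.1 (hrc.pos R hR), deformation, deformation,
      hx (log_nonpos hR.1.le hR.2)]
  · rw [PhiHat1_eq_mul_cauchyStress _ (exp_pos xc), div_self (exp_pos xc).ne', log_exp]
    positivity
  rintro _ hlam rl rl' rl'' hrl hTl rfl
  have hpos : 0 < cauchyStress k κ h' 1 (log (rl 1)) := hxc.trans <|
    strictMono_cauchyStress hκ hmono one_pos ((lt_log_iff_exp_lt (exp_pos xc |>.trans hlam)).2 hlam)
  obtain ⟨α, hα, hscale⟩ := hrl.exists_eq_deformation_mul_div hκ hmono hc hTl hp hlt hT hpos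
  have hα₁ : deformation x α / α = rl 1 := by rw [hscale 1 ⟨one_pos, le_rfl⟩, mul_one]
  exact ⟨α, hα, hα₁,
    fun β hβ hβ₁ ↦ hp.injOn_deformation_div hlt hβ hα (hβ₁.trans hα₁.symm), hscale⟩

/-- a cavitating solution of the modified equilibrium equation with
`T̂ → 0` at the cavity extends uniquely to a solution on `(0,∞)` with `r' < r/R`;
its strains converge to a critical boundary displacement `λ_c > 1` at infinity, and
every solution with `T̂ → 0` and boundary value `λ > λ_c` is the rescaling
`r_λ(R) = r_c(αR)/α`, where `α` is the unique solution of `r_c(α)/α = λ`. -/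
theorem stmt19 (n : ℕ) (hn : 2 ≤ n) (κ : ℝ) (hκ : 0 < κ)
    (h h' h'' : ℝ → ℝ) (hh : GoodH h h' h'')
    (hstressfree : PhiHat1 n κ h' 1 1 = 0)
    (rc rc' rc'' : ℝ → ℝ) (hrc : ModRadialSol n κ h' rc rc' rc'')
    (hcont : ContinuousOn rc (Set.Icc 0 1)) (hcav : 0 < rc 0)
    (hT0 : Tendsto (fun R => THat n κ h' (rc' R) (rc R / R))
      (nhdsWithin 0 (Set.Ioi 0)) (nhds 0)) :
    ∃ re re' : ℝ → ℝ,
      (∀ R ∈ Set.Ioc (0:ℝ) 1, re R = rc R) ∧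
      (∀ R ∈ Set.Ioi (0:ℝ), 0 < re R ∧ 0 < re' R ∧ HasDerivAt re (re' R) R) ∧
      (∀ R ∈ Set.Ioi (0:ℝ),
        HasDerivAt (fun s => s ^ (n - 1) * PhiHat1 n κ h' (re' s) (re s / s))
          (((n:ℝ) - 1) * R ^ (n - 2) * PhiHat2 n κ h' (re' R) (re R / R)) R) ∧
      (∀ R ∈ Set.Ioi (0:ℝ), re' R < re R / R) ∧
      ∃ lamc : ℝ, 1 < lamc ∧
        Tendsto re' atTop (nhds lamc) ∧
        Tendsto (fun R => re R / R) atTop (nhds lamc) ∧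
        ∀ lam : ℝ, lamc < lam →
          ∀ rl rl' rl'' : ℝ → ℝ, ModRadialSol n κ h' rl rl' rl'' →
            Tendsto (fun R => THat n κ h' (rl' R) (rl R / R))
              (nhdsWithin 0 (Set.Ioi 0)) (nhds 0) →
            rl 1 = lam →
            ∃ α : ℝ, 0 < α ∧ re α / α = lam ∧
              (∀ β : ℝ, 0 < β → re β / β = lam → β = α) ∧
              ∀ R ∈ Set.Ioc (0:ℝ) 1, rl R = re (α * R) / α := by
  obtain ⟨re, re', heq, hderiv, hequil, hlt, lamc, ⟨hlamc, hpos⟩, hlim⟩ :=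
    stmt19_general n hn κ hκ h' hh.continuousOn_deriv hh.monotoneOn_deriv rc rc' rc'' hrc
      (hrc.exists_deriv_lt_of_cavity hcont hcav) hT0
  exact ⟨re, re', heq, hderiv, hequil, hlt, lamc,
    lt_of_PhiHat1_nonpos_of_pos hn hκ hh.monotoneOn_deriv one_pos hlamc hstressfree.le hpos, hlim⟩

end
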